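/- arXiv:2602.07221 — 2 statements merged into one kernel-verified Lean document; each statement's English description precedes it below -/
import Mathlib

section
/- Let s ∈ (1/2,1) and let N > 2s be a positive integer. Let Ω ⊂ ℝ^N be a bounded open set of class C^{1,1}, and let f : ℝ^N × ℝ → ℝ be locally β-Hölder continuous for some β ∈ (0,1). Let u be a weak solution of (−Δ)^s u = f(·,u) in Ω with u = 0 in ℝ^N∖Ω, differentiable at every point of Ω. For each x ∈ Ω let G(x,·) be a Green function of (−Δ)^s in Ω with pole at x such that z ↦ G(x,z) is differentiable on Ω∖{x}, with the uniform gradient bound sup_{x∈Ω} ∫_Ω |∇_z G(x,z)| dz < ∞, and assume the fractional normal traces γ_0^s(u) and γ_0^s(G(x,·)) exist as continuous functions on ∂Ω. If moreover γ_0^s(u) ≡ 0 on ∂Ω, then ∇u is bounded on Ω, i.e. sup_{x∈Ω} |∇u(x)| < ∞. -/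
open MeasureTheory Real Filter Metric

noncomputable section

/-- Euclidean space `ℝ^N`. -/
abbrev Euc (N : ℕ) := EuclideanSpace ℝ (Fin N)

/-- The normalizing constant `c_{N,s}` of the fractional Laplacian. -/
def cNs (N : ℕ) (s : ℝ) : ℝ :=
  Real.pi ^ ((N : ℝ) / 2) * s * (4 : ℝ) ^ s * Real.Gamma (((N : ℝ) + 2 * s) / 2) /
    Real.Gamma (1 - s)

/-- The constant `b_{N,s}` of the fundamental solution. -/
def bNs (N : ℕ) (s : ℝ) : ℝ :=
  Real.pi ^ (-(N : ℝ) / 2) * (4 : ℝ) ^ (-s) * Real.Gamma (((N : ℝ) - 2 * s) / 2) /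
    Real.Gamma s

/-- The fractional Laplacian `(-Δ)^s u (x)`, via the absolutely convergent
symmetrized integral `-(c_{N,s}/2) ∫ (u(x+h)+u(x-h)-2u(x))/|h|^{N+2s} dh`. -/
def fracLap (N : ℕ) (s : ℝ) (u : Euc N → ℝ) (x : Euc N) : ℝ :=
  -(cNs N s / 2) * ∫ h : Euc N, (u (x + h) + u (x - h) - 2 * u x) / ‖h‖ ^ ((N : ℝ) + 2 * s)

/-- `φ ∈ C_c^∞(Ω)`. -/
def IsTestFn (N : ℕ) (Ω : Set (Euc N)) (φ : Euc N → ℝ) : Prop :=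
  ContDiff ℝ (⊤ : ℕ∞) φ ∧ HasCompactSupport φ ∧ tsupport φ ⊆ Ω

/-- The signed distance `δ̄(z) = dist(z, Ωᶜ) - dist(z, Ω)`. -/
def signedDistSet (N : ℕ) (Ω : Set (Euc N)) (z : Euc N) : ℝ :=
  Metric.infDist z Ωᶜ - Metric.infDist z Ω

/-- A bounded open set of class `C^{1,1}`: the signed distance is differentiable with
Lipschitz gradient on a neighborhood of `∂Ω`. -/
def IsC11 (N : ℕ) (Ω : Set (Euc N)) : Prop :=
  IsOpen Ω ∧ Bornology.IsBounded Ω ∧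
    ∃ U : Set (Euc N), IsOpen U ∧ frontier Ω ⊆ U ∧
      (∀ z ∈ U, DifferentiableAt ℝ (signedDistSet N Ω) z) ∧
      ∃ K : NNReal, LipschitzOnWith K (fun z => gradient (signedDistSet N Ω) z) U

/-- `δ(z) = dist(z, ∂Ω)`. -/
def bdist (N : ℕ) (Ω : Set (Euc N)) (z : Euc N) : ℝ := Metric.infDist z (frontier Ω)

/-- The outward unit normal `ν = -∇δ̄` (meaningful on `∂Ω`). -/
def outNormal (N : ℕ) (Ω : Set (Euc N)) (θ : Euc N) : Euc N :=
  -gradient (signedDistSet N Ω) θ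

/-- The surface measure on `∂Ω`: the `(N-1)`-dimensional Hausdorff measure
restricted to `∂Ω`. -/
def surf (N : ℕ) (Ω : Set (Euc N)) : Measure (Euc N) :=
  (μH[(N : ℝ) - 1]).restrict (frontier Ω)

/-- `g` is the fractional normal trace `γ_0^s(w)` on `∂Ω`. -/
def HasFracTrace (N : ℕ) (s : ℝ) (Ω : Set (Euc N)) (w g : Euc N → ℝ) : Prop :=
  ContinuousOn g (frontier Ω) ∧
    ∀ θ ∈ frontier Ω,
      Filter.Tendsto (fun z => w z / bdist N Ω z ^ s) (nhdsWithin θ Ω) (nhds (g θ))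

/-- `G` is a Green function of `(-Δ)^s` in `Ω` with pole at `x`, with constant `C`
in the Green function estimate. -/
def IsGreenFn (N : ℕ) (s : ℝ) (Ω : Set (Euc N)) (C : ℝ) (x : Euc N) (G : Euc N → ℝ) : Prop :=
  Integrable G ∧ (∀ z, z ∉ Ω → G z = 0) ∧
    (∀ φ, IsTestFn N Ω φ → ∫ z in Ω, G z * fracLap N s φ z = φ x) ∧
    ∀ z, z ≠ x → 0 ≤ G z ∧
      G z ≤ C * min (‖x - z‖ ^ (2 * s - (N : ℝ)))
        (bdist N Ω x ^ s * bdist N Ω z ^ s * ‖x - z‖ ^ (-(N : ℝ)))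

/-- The quadratic form `E_s(u,v)` associated with `(-Δ)^s`. -/
def Es (N : ℕ) (s : ℝ) (u v : Euc N → ℝ) : ℝ :=
  (cNs N s / 2) *
    ∫ p : Euc N × Euc N, (u p.1 - u p.2) * (v p.1 - v p.2) / ‖p.1 - p.2‖ ^ ((N : ℝ) + 2 * s)

/-- `u` is a weak solution of `(-Δ)^s u = f(·,u)` in `Ω`, `u = 0` outside `Ω`. -/
def IsWeakSolution (N : ℕ) (s : ℝ) (Ω : Set (Euc N)) (f : Euc N → ℝ → ℝ) (u : Euc N → ℝ) :
    Prop :=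
  (∃ C : NNReal, HolderWith C s.toNNReal u) ∧ (∀ z, z ∉ Ω → u z = 0) ∧
    ∀ φ, IsTestFn N Ω φ → Es N s u φ = ∫ z in Ω, f z (u z) * φ z

/-- Locally `β`-Hölder continuous function. -/
def LocHolder {X : Type*} [PseudoEMetricSpace X] (β : ℝ) (f : X → ℝ) : Prop :=
  ∀ p : X, ∃ t ∈ nhds p, ∃ C : NNReal, HolderOnWith C β.toNNReal f t

/-- integrals of the bracket kernels -/
lemma bracket_int (N : ℕ) {a : ℝ} (ha : 0 < a) : ∃ Ca : ℝ, 0 < Ca ∧ ∀ ρ : ℝ, 0 < ρ →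
    Integrable (fun h : Euc N => (ρ + ‖h‖) ^ (-((N:ℝ) + a))) ∧
    ∫ h : Euc N, (ρ + ‖h‖) ^ (-((N:ℝ) + a)) ≤ Ca * ρ ^ (-a) := by
  have h1 : Integrable (fun h : Euc N => (1 + ‖h‖) ^ (-((N:ℝ) + a))) := by
    apply integrable_one_add_norm
    simp [ha]
  have h0 : 0 ≤ ∫ h : Euc N, (1 + ‖h‖) ^ (-((N:ℝ) + a)) :=
    integral_nonneg fun h => by positivity
  refine ⟨(∫ h : Euc N, (1 + ‖h‖) ^ (-((N:ℝ) + a))) + 1, by positivity, fun ρ hρ => ?_⟩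
  have e : (fun h : Euc N => (ρ + ‖h‖) ^ (-((N:ℝ) + a))) =
      fun h => ρ ^ (-((N:ℝ) + a)) * (1 + ‖ρ⁻¹ • h‖) ^ (-((N:ℝ) + a)) := by
    funext h
    rw [← Real.mul_rpow hρ.le (by positivity)]
    congr 1
    rw [norm_smul, norm_inv, Real.norm_of_nonneg hρ.le]
    field_simp
  rw [e]
  constructor
  · exact (h1.comp_smul (inv_ne_zero hρ.ne')).const_mul _
  · rw [integral_const_mul, Measure.integral_comp_inv_smul volume
      (fun h : Euc N => (1 + ‖h‖) ^ (-((N:ℝ) + a))) ρ]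
    rw [finrank_euclideanSpace, Fintype.card_fin, abs_of_pos (by positivity), smul_eq_mul,
      ← mul_assoc, ← Real.rpow_natCast, ← Real.rpow_add hρ]
    have : -((N:ℝ) + a) + N = -a := by ring
    rw [this, mul_comm]
    gcongr
    linarith

/-- singular weight -/
def mw (N : ℕ) (s p : ℝ) (h : Euc N) : ℝ := min (‖h‖ ^ p) 1 / ‖h‖ ^ ((N : ℝ) + 2 * s)

lemma mw_nonneg (N : ℕ) (s p : ℝ) (h : Euc N) : 0 ≤ mw N s p h := by
  unfold mw; positivity

lemma mw_int (N : ℕ) (hN : 0 < N) {s p : ℝ} (hs : 0 < s) (hp : 2 * s < p) :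
    Integrable (mw N s p) := by
  have : Nonempty (Fin N) := ⟨⟨0, hN⟩⟩
  have := (integrable_fun_norm_addHaar (volume : Measure (Euc N))
    (f := fun y : ℝ => min (y ^ p) 1 / y ^ ((N:ℝ) + 2 * s))).2
  refine this ?_
  rw [finrank_euclideanSpace, Fintype.card_fin]
  have key : ∀ y : ℝ, 0 < y → y ^ (N - 1) • (min (y ^ p) 1 / y ^ ((N:ℝ) + 2 * s)) =
      min (y ^ p) 1 * y ^ (-1 - 2 * s) := by
    intro y hy
    rw [smul_eq_mul, ← Real.rpow_natCast, Nat.cast_sub (by omega), div_eq_mul_inv,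
      ← Real.rpow_neg hy.le]
    rw [mul_comm, mul_assoc, ← Real.rpow_add hy]
    congr 2
    push_cast; ring
  rw [← Set.Ioc_union_Ioi_eq_Ioi (zero_le_one' ℝ), integrableOn_union]
  constructor
  · have : IntegrableOn (fun y : ℝ => y ^ (p - 1 - 2 * s)) (Set.Ioc 0 1) := by
      rw [← intervalIntegrable_iff_integrableOn_Ioc_of_le zero_le_one]
      exact intervalIntegral.intervalIntegrable_rpow' (by linarith)
    refine this.congr_fun (fun y hy => ?_) measurableSet_Ioc
    simp only
    rw [key y hy.1, min_eq_left (Real.rpow_le_one hy.1.le hy.2 (by linarith)), ← Real.rpow_add hy.1]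
    congr 1; ring
  · have : IntegrableOn (fun y : ℝ => y ^ (-1 - 2 * s)) (Set.Ioi 1) :=
      integrableOn_Ioi_rpow_of_lt (by linarith) one_pos
    refine this.congr_fun (fun y hy => ?_) measurableSet_Ioi
    have hy' : (1:ℝ) < y := hy
    simp only
    rw [key y (by linarith), min_eq_right (Real.one_le_rpow hy'.le (by linarith)), one_mul]

/-- second difference bound -/
lemma second_diff {N : ℕ} {k : Euc N → ℝ} (hk : ContDiff ℝ (⊤ : ℕ∞) k) (hc : HasCompactSupport k) :
    ∃ C : ℝ, 0 ≤ C ∧ ∀ z h, |k (z + h) + k (z - h) - 2 * k z| ≤ C * min (‖h‖ ^ (2:ℝ)) 1 := by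
  obtain ⟨L, hL⟩ := ContDiff.lipschitzWith_of_hasCompactSupport (hc.fderiv (𝕜 := ℝ))
    (hk.fderiv_right (m := 1) (by norm_cast)) one_ne_zero
  obtain ⟨B, hB⟩ := hc.exists_bound_of_continuous hk.continuous
  have hB0 : 0 ≤ B := (norm_nonneg _).trans (hB 0)
  have hd : Differentiable ℝ k := hk.differentiable (by norm_cast)
  have one : ∀ z h, ‖k (z + h) - k z - fderiv ℝ k z h‖ ≤ L * ‖h‖ * ‖h‖ := by
    intro z h
    have := Convex.norm_image_sub_le_of_norm_hasFDerivWithin_le' (f := k)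
      (f' := fun x => fderiv ℝ k x) (φ := fderiv ℝ k z) (C := L * ‖h‖) (s := closedBall z ‖h‖)
      (x := z) (y := z + h) (fun x _ => (hd x).hasFDerivAt.hasFDerivWithinAt) ?_
      (convex_closedBall _ _) (by simp) (by simp)
    · simpa using this
    · intro x hx
      rw [← dist_eq_norm]
      exact (hL.dist_le_mul _ _).trans (by gcongr; exact hx)
  refine ⟨2 * L + 4 * B, by positivity, fun z h => ?_⟩
  have a1 : |k (z + h) + k (z - h) - 2 * k z| ≤ 2 * L * ‖h‖ ^ (2:ℝ) := by
    have h1 := abs_le.1 (one z h)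
    have h2 := abs_le.1 (one z (-h))
    simp only [norm_neg, map_neg, ← sub_eq_add_neg] at h2
    rw [Real.rpow_two, abs_le]
    constructor <;> nlinarith [h1.1, h1.2, h2.1, h2.2]
  have a2 : |k (z + h) + k (z - h) - 2 * k z| ≤ 4 * B := by
    have h1 := abs_le.1 (hB (z + h))
    have h2 := abs_le.1 (hB (z - h))
    have h3 := abs_le.1 (hB z)
    rw [abs_le]
    constructor <;> linarith [h1.1, h1.2, h2.1, h2.2, h3.1, h3.2]
  rcases min_cases (‖h‖ ^ (2:ℝ)) 1 with ⟨h1, h2⟩ | ⟨h1, h2⟩ <;> rw [h1]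
  · have : 0 ≤ ‖h‖ ^ (2:ℝ) := by positivity
    nlinarith [mul_nonneg hB0 this]
  · have := L.2
    have h3 : (0:ℝ) ≤ L := L.2
    linarith

lemma fl_meas2 {N : ℕ} {s : ℝ} {k : Euc N → ℝ} (hk : Continuous k) :
    Measurable (fun p : Euc N × Euc N =>
      (k (p.1 + p.2) + k (p.1 - p.2) - 2 * k p.1) / ‖p.2‖ ^ ((N : ℝ) + 2 * s)) := by
  have h1 : Measurable fun p : Euc N × Euc N => k (p.1 + p.2) + k (p.1 - p.2) - 2 * k p.1 := by
    apply Continuous.measurable; fun_prop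
  have h2 : Measurable fun p : Euc N × Euc N => ‖p.2‖ ^ ((N : ℝ) + 2 * s) := by fun_prop
  exact h1.div h2

lemma fl_int {N : ℕ} (hN : 0 < N) {s : ℝ} (hs : 0 < s) (hs1 : s < 1) {k : Euc N → ℝ}
    (hk : ContDiff ℝ (⊤ : ℕ∞) k) (hc : HasCompactSupport k) (z : Euc N) :
    Integrable (fun h : Euc N => (k (z + h) + k (z - h) - 2 * k z) / ‖h‖ ^ ((N : ℝ) + 2 * s)) := by
  obtain ⟨C, hC0, hC⟩ := second_diff hk hc
  refine ((mw_int N hN hs (p := 2) (by linarith)).const_mul C).mono' ?_ ?_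
  · have := (fl_meas2 (s := s) hk.continuous).comp (measurable_prodMk_left (x := z))
    exact this.aestronglyMeasurable
  · refine Eventually.of_forall fun h => ?_
    rw [norm_div, Real.norm_of_nonneg (show 0 ≤ ‖h‖ ^ ((N : ℝ) + 2 * s) by positivity), mw,
      ← mul_div_assoc]
    gcongr
    exact hC z h

lemma fl_meas {N : ℕ} {s : ℝ} {k : Euc N → ℝ} (hk : Continuous k) :
    Measurable (fracLap N s k) := by
  unfold fracLap
  have := (fl_meas2 (s := s) hk).stronglyMeasurable.integral_prod_right' (ν := volume)
  exact (this.measurable).const_mul _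

lemma fl_decay {N : ℕ} (hN : 0 < N) {s : ℝ} (hs : 0 < s) (hs1 : s < 1) {k : Euc N → ℝ}
    (hk : ContDiff ℝ (⊤ : ℕ∞) k) (h0 : ∀ y, 1 < ‖y‖ → k y = 0) :
    ∃ C : ℝ, 0 ≤ C ∧ ∀ y, |fracLap N s k y| ≤ C * (1 + ‖y‖) ^ (-((N : ℝ) + 2 * s)) := by
  have hc : HasCompactSupport k := HasCompactSupport.of_support_subset_isCompact
    (isCompact_closedBall 0 1) (fun y hy => by
      by_contra h
      exact hy (h0 y (by simpa using h)))
  obtain ⟨C, hC0, hC⟩ := second_diff hk hc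
  obtain ⟨B, hB⟩ := hc.exists_bound_of_continuous hk.continuous
  have hB0 : 0 ≤ B := (norm_nonneg _).trans (hB 0)
  set b : ℝ := (N : ℝ) + 2 * s with hb
  have hbpos : 0 < b := by positivity
  set V : ℝ := (volume : Measure (Euc N)).real (closedBall 0 1) with hV
  have hV0 : 0 ≤ V := measureReal_nonneg
  have m0 : 0 ≤ ∫ h, mw N s 2 h := integral_nonneg (mw_nonneg N s 2)
  -- bounded
  have b1 : ∀ y, |∫ h : Euc N, (k (y + h) + k (y - h) - 2 * k y) / ‖h‖ ^ b| ≤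
      C * ∫ h, mw N s 2 h := by
    intro y
    rw [← integral_const_mul, ← Real.norm_eq_abs]
    refine norm_integral_le_of_norm_le ((mw_int N hN hs (p := 2) (by linarith)).const_mul C) ?_
    refine Eventually.of_forall fun h => ?_
    rw [norm_div, Real.norm_of_nonneg (show 0 ≤ ‖h‖ ^ b by positivity), mw,
      ← mul_div_assoc]
    gcongr
    exact hC y h
  -- far
  have b2 : ∀ y, 2 ≤ ‖y‖ → |∫ h : Euc N, (k (y + h) + k (y - h) - 2 * k y) / ‖h‖ ^ b| ≤
      (2 * B * V * 4 ^ b) * (1 + ‖y‖) ^ (-b) := by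
    intro y hy
    set c : ℝ := B * (4 ^ b * (1 + ‖y‖) ^ (-b)) with hcdef
    have hc0 : 0 ≤ c := by positivity
    have ptw : ∀ h, ‖(k (y + h) + k (y - h) - 2 * k y) / ‖h‖ ^ b‖ ≤
      (closedBall (-y) 1).indicator (fun _ => c) h + (closedBall y 1).indicator (fun _ => c) h := by
      intro h
      have hky : k y = 0 := h0 y (by linarith)
      have far : ∀ h : Euc N, ‖y‖ - 1 ≤ ‖h‖ → B / ‖h‖ ^ b ≤ c := by
        intro h hh
        have : (1 + ‖y‖) / 4 ≤ ‖h‖ := by linarith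
        rw [hcdef, div_eq_mul_inv]
        gcongr
        rw [Real.rpow_neg (by positivity), ← div_eq_mul_inv, ← inv_div, ← Real.div_rpow (by positivity) (by norm_num)]
        gcongr
      have t1 : |k (y + h)| / ‖h‖ ^ b ≤ (closedBall (-y) 1).indicator (fun _ => c) h := by
        by_cases hh : h ∈ closedBall (-y) 1
        · rw [Set.indicator_of_mem hh]
          refine le_trans ?_ (far h ?_)
          · gcongr; exact hB _
          · rw [mem_closedBall, dist_eq_norm] at hh
            have := norm_sub_norm_le (-y) h
            rw [norm_neg, norm_sub_rev] at this
            linarith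
        · rw [Set.indicator_of_notMem hh, h0]
          · simp
          · rw [mem_closedBall, dist_eq_norm, not_le] at hh
            rwa [sub_neg_eq_add, add_comm] at hh
      have t2 : |k (y - h)| / ‖h‖ ^ b ≤ (closedBall y 1).indicator (fun _ => c) h := by
        by_cases hh : h ∈ closedBall y 1
        · rw [Set.indicator_of_mem hh]
          refine le_trans ?_ (far h ?_)
          · gcongr; exact hB _
          · rw [mem_closedBall, dist_eq_norm] at hh
            have := norm_sub_norm_le (y) h
            rw [norm_sub_rev] at this
            linarith
        · rw [Set.indicator_of_notMem hh, h0]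
          · simp
          · rw [mem_closedBall, dist_eq_norm, not_le] at hh
            rwa [norm_sub_rev] at hh
      rw [norm_div, Real.norm_of_nonneg (show 0 ≤ ‖h‖ ^ b by positivity), hky, mul_zero, sub_zero]
      refine le_trans ?_ (add_le_add t1 t2)
      rw [← add_div]
      gcongr
      exact abs_add_le _ _
    have i1 : ∀ a : Euc N, Integrable ((closedBall a 1).indicator (fun _ => c)) := fun a =>
      (integrable_indicator_iff measurableSet_closedBall).2
        (integrableOn_const (measure_closedBall_lt_top.ne))
    have i2 : ∀ a : Euc N, ∫ h, (closedBall a 1).indicator (fun _ => c) h = V * c := fun a => by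
      rw [integral_indicator measurableSet_closedBall, setIntegral_const, smul_eq_mul, hV]
      congr 1
      rw [measureReal_def, measureReal_def, Measure.addHaar_closedBall_center]
    rw [← Real.norm_eq_abs]
    refine (norm_integral_le_of_norm_le ((i1 (-y)).add (i1 y)) (Eventually.of_forall ptw)).trans ?_
    simp only [Pi.add_apply]
    rw [integral_add (i1 (-y)) (i1 y), i2, i2, hcdef]
    apply le_of_eq; ring
  set A1 := C * ∫ h, mw N s 2 h with hA1
  have hA10 : 0 ≤ A1 := by positivity
  refine ⟨|cNs N s / 2| * (A1 * 3 ^ b + 2 * B * V * 4 ^ b), by positivity, fun y => ?_⟩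
  unfold fracLap
  rw [abs_mul, abs_neg, mul_assoc]
  gcongr
  have p0 : 0 ≤ (1 + ‖y‖) ^ (-b) := by positivity
  rcases le_total 2 ‖y‖ with hy | hy
  · refine (b2 y hy).trans ?_
    gcongr
    have : 0 ≤ A1 * 3 ^ b := by positivity
    linarith
  · refine (b1 y).trans ?_
    have : 1 ≤ 3 ^ b * (1 + ‖y‖) ^ (-b) := by
      rw [Real.rpow_neg (by positivity), ← div_eq_mul_inv, ← Real.div_rpow (by positivity) (by positivity)]
      apply Real.one_le_rpow _ hbpos.le
      rw [le_div_iff₀ (by positivity)]; linarith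
    have h2 : 0 ≤ 2 * B * V * 4 ^ b * (1 + ‖y‖) ^ (-b) := by positivity
    nlinarith

lemma fl_scale {N : ℕ} {s : ℝ} (k : Euc N → ℝ) {ρ : ℝ} (hρ : 0 < ρ) (c : ℝ) (y : Euc N) :
    fracLap N s (fun y => c * k (ρ⁻¹ • y)) y = c * ρ ^ (-(2 * s)) * fracLap N s k (ρ⁻¹ • y) := by
  unfold fracLap
  set b : ℝ := (N : ℝ) + 2 * s with hb
  have e : (fun h : Euc N => (c * k (ρ⁻¹ • (y + h)) + c * k (ρ⁻¹ • (y - h)) - 2 * (c * k (ρ⁻¹ • y))) /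
      ‖h‖ ^ b) = fun h => (c * ρ ^ (-b)) * (fun h => (k (ρ⁻¹ • y + h) + k (ρ⁻¹ • y - h)
        - 2 * k (ρ⁻¹ • y)) / ‖h‖ ^ b) (ρ⁻¹ • h) := by
    funext h
    simp only
    rw [smul_add, smul_sub, norm_smul, norm_inv, Real.norm_of_nonneg hρ.le,
      Real.mul_rpow (by positivity) (by positivity), Real.rpow_neg hρ.le, Real.inv_rpow hρ.le]
    have : (ρ ^ b) ≠ 0 := by positivity
    rw [div_mul_eq_div_div, div_inv_eq_mul]
    field_simp
  rw [e, integral_const_mul, Measure.integral_comp_inv_smul volume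
    (fun h => (k (ρ⁻¹ • y + h) + k (ρ⁻¹ • y - h) - 2 * k (ρ⁻¹ • y)) / ‖h‖ ^ b) ρ, finrank_euclideanSpace,
    Fintype.card_fin, abs_of_pos (by positivity), smul_eq_mul]
  have : ρ ^ (-(2 * s)) = ρ ^ (-b) * ρ ^ N := by
    rw [← Real.rpow_natCast ρ N, ← Real.rpow_add hρ]; congr 1; rw [hb]; ring
  rw [this]; ring

lemma fl_refl {N : ℕ} {s : ℝ} (k : Euc N → ℝ) (z y : Euc N) :
    fracLap N s (fun y => k (z - y)) y = fracLap N s k (z - y) := by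
  unfold fracLap
  congr 2
  funext h
  beta_reduce
  rw [show z - (y + h) = z - y - h by abel, show z - (y - h) = z - y + h by abel]
  ring

lemma fl_conv {N : ℕ} (hN : 0 < N) {s : ℝ} (hs : 0 < s) (hs1 : s < 1) {k w : Euc N → ℝ}
    (hk : ContDiff ℝ (⊤ : ℕ∞) k) (hc : HasCompactSupport k) (hw : Integrable w) (z : Euc N) :
    fracLap N s (fun z => ∫ y, w y * k (z - y)) z = ∫ y, w y * fracLap N s k (z - y) := by
  obtain ⟨C, hC0, hC⟩ := second_diff hk hc
  obtain ⟨B, hB⟩ := hc.exists_bound_of_continuous hk.continuous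
  have iw : ∀ a : Euc N, Integrable (fun y => w y * k (a - y)) := fun a =>
    hw.mul_bdd (c := B) (by
      have := hk.continuous
      exact (by fun_prop : Continuous fun y => k (a - y)).aestronglyMeasurable)
      (Eventually.of_forall fun y => hB _)
  unfold fracLap
  simp_rw [mul_left_comm (w _), ← integral_const_mul]
  rw [integral_const_mul, integral_const_mul]
  congr 1
  have e : ∀ h : Euc N, (((∫ y, w y * k (z + h - y)) + ∫ y, w y * k (z - h - y)) -
      2 * ∫ y, w y * k (z - y)) / ‖h‖ ^ ((N:ℝ) + 2 * s) =
      ∫ y, w y * ((k (z - y + h) + k (z - y - h) - 2 * k (z - y)) / ‖h‖ ^ ((N:ℝ) + 2 * s)) := by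
    intro h
    have i1 : Integrable (fun a => w a * k (z + h - a) + w a * k (z - h - a)) :=
      (iw (z + h)).add (iw (z - h))
    have i2 : Integrable (fun a => 2 * (w a * k (z - a))) := (iw z).const_mul 2
    rw [← integral_const_mul, ← integral_add (iw (z + h)) (iw (z - h)), ← integral_sub i1 i2,
      ← integral_div]
    congr 1
    funext y
    rw [show z - y + h = z + h - y by abel, show z - y - h = z - h - y by abel]
    ring
  simp_rw [e]
  simp_rw [integral_const_mul]
  rw [integral_integral_swap]
  · simp_rw [integral_const_mul]
  · have dom : Integrable (fun p : Euc N × Euc N => (C * mw N s 2 p.1) * w p.2)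
      (volume.prod volume) :=
      ((mw_int N hN hs (p := 2) (by linarith)).const_mul C).mul_prod hw
    refine dom.mono ?_ ?_
    · have m1 : Measurable (fun p : Euc N × Euc N => (z - p.2, p.1)) := by fun_prop
      have m2 := (fl_meas2 (s := s) hk.continuous).comp m1
      exact (hw.aestronglyMeasurable.comp_snd).mul m2.aestronglyMeasurable
    · refine Eventually.of_forall fun p => ?_
      simp only [Function.uncurry]
      rw [norm_mul, norm_mul, norm_div, mul_comm]
      gcongr
      rw [Real.norm_of_nonneg (show 0 ≤ ‖p.1‖ ^ ((N:ℝ) + 2 * s) by positivity),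
        Real.norm_of_nonneg (mul_nonneg hC0 (mw_nonneg N s 2 _)), mw, ← mul_div_assoc]
      gcongr
      exact hC _ _

lemma Es_eq {N : ℕ} (hN : 0 < N) {s : ℝ} (hs : 0 < s) (hs1 : s < 1) {u φ : Euc N → ℝ}
    (huc : Continuous u) (hui : Integrable u) {Bu Cu : ℝ} (hBu : ∀ y, |u y| ≤ Bu)
    (hCu0 : 0 ≤ Cu) (hCu : ∀ y z, |u y - u z| ≤ Cu * ‖y - z‖ ^ s)
    (hk : ContDiff ℝ (⊤ : ℕ∞) φ) (hc : HasCompactSupport φ) :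
    Es N s u φ = ∫ y, u y * fracLap N s φ y := by
  obtain ⟨C, hC0, hC⟩ := second_diff hk hc
  obtain ⟨B, hB⟩ := hc.exists_bound_of_continuous hk.continuous
  have hB0 : 0 ≤ B := (norm_nonneg _).trans (hB 0)
  have hBu0 : 0 ≤ Bu := (abs_nonneg _).trans (hBu 0)
  obtain ⟨L, hL⟩ := ContDiff.lipschitzWith_of_hasCompactSupport hc hk (by simp)
  have hφc := hk.continuous
  set b : ℝ := (N : ℝ) + 2 * s with hb
  set S : Set (Euc N) := tsupport φ with hS
  have hSc : IsCompact S := hc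
  have hS0 : ∀ y, y ∉ S → φ y = 0 := fun y hy => image_eq_zero_of_notMem_tsupport hy
  set D : ℝ := Cu * L + 4 * Bu * B with hD
  have hD0 : 0 ≤ D := by positivity
  set J : Euc N × Euc N → ℝ := fun p => (u p.1 - u (p.1 + p.2)) * (φ p.1 - φ (p.1 + p.2)) / ‖p.2‖ ^ b
    with hJ
  have hJm : AEStronglyMeasurable J (volume.prod volume) := by
    apply Measurable.aestronglyMeasurable
    apply Measurable.div
    · apply Continuous.measurable; fun_prop
    · fun_prop
  have diffb : ∀ y h, |(u y - u (y + h)) * (φ y - φ (y + h))| ≤ D * min (‖h‖ ^ (1 + s)) 1 := by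
    intro y h
    rw [abs_mul]
    have a1 : |u y - u (y + h)| ≤ Cu * ‖h‖ ^ s := by simpa using hCu y (y + h)
    have a2 : |φ y - φ (y + h)| ≤ L * ‖h‖ := by
      simpa [dist_eq_norm] using hL.dist_le_mul y (y + h)
    have a3 : |u y - u (y + h)| ≤ 2 * Bu := by
      have h1 := abs_le.1 (hBu y)
      have h2 := abs_le.1 (hBu (y + h))
      rw [abs_le]; constructor <;> linarith [h1.1, h1.2, h2.1, h2.2]
    have a4 : |φ y - φ (y + h)| ≤ 2 * B := by
      have h1 := abs_le.1 (hB y)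
      have h2 := abs_le.1 (hB (y + h))
      rw [abs_le]; constructor <;> linarith [h1.1, h1.2, h2.1, h2.2]
    have b1 : |u y - u (y + h)| * |φ y - φ (y + h)| ≤ Cu * L * ‖h‖ ^ (1 + s) := by
      calc _ ≤ (Cu * ‖h‖ ^ s) * (L * ‖h‖) := by gcongr
        _ = _ := by
          rcases eq_or_ne h 0 with rfl | hh
          · rw [norm_zero, Real.zero_rpow (by linarith), Real.zero_rpow (by linarith)]; simp
          · rw [Real.rpow_add (norm_pos_iff.2 hh), Real.rpow_one]; ring
    have b2 : |u y - u (y + h)| * |φ y - φ (y + h)| ≤ 4 * Bu * B := by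
      calc _ ≤ (2 * Bu) * (2 * B) := by gcongr
        _ = _ := by ring
    have c1 : 0 ≤ Cu * L := by positivity
    have c2 : 0 ≤ Bu * B := by positivity
    rcases min_cases (‖h‖ ^ (1 + s)) 1 with ⟨h1, h2⟩ | ⟨h1, h2⟩ <;> rw [h1, hD]
    · have : 0 ≤ ‖h‖ ^ (1 + s) := by positivity
      nlinarith [mul_nonneg c2 this]
    · linarith
  have hJi : Integrable J (volume.prod volume) := by
    have i0 : Integrable (S.indicator (fun _ => (1:ℝ))) :=
      (integrable_indicator_iff hSc.measurableSet).2 (integrableOn_const hSc.measure_lt_top.ne)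
    have i1 : Integrable (fun p : Euc N × Euc N => S.indicator (fun _ => (1:ℝ)) p.1 *
        (D * mw N s (1 + s) p.2)) (volume.prod volume) :=
      i0.mul_prod ((mw_int N hN hs (p := 1 + s) (by linarith)).const_mul D)
    have i2 := (measurePreserving_add_prod (volume : Measure (Euc N)) (volume : Measure (Euc N))).integrable_comp_of_integrable i1
    refine (i1.add i2).mono' hJm ?_
    refine Eventually.of_forall fun p => ?_
    have hm := mw_nonneg N s (1 + s) p.2
    have n1 : 0 ≤ S.indicator (fun _ => (1:ℝ)) p.1 := Set.indicator_nonneg (fun _ _ => zero_le_one) _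
    have n2 : 0 ≤ S.indicator (fun _ => (1:ℝ)) (p.1 + p.2) :=
      Set.indicator_nonneg (fun _ _ => zero_le_one) _
    simp only [Pi.add_apply, Function.comp]
    rw [← add_mul]
    by_cases h1 : p.1 ∈ S ∨ p.1 + p.2 ∈ S
    · have : 1 ≤ S.indicator (fun _ => (1:ℝ)) p.1 + S.indicator (fun _ => (1:ℝ)) (p.1 + p.2) := by
        rcases h1 with h1 | h1
        · rw [Set.indicator_of_mem h1]; linarith
        · rw [Set.indicator_of_mem h1]; linarith
      refine le_trans ?_ (le_mul_of_one_le_left (by positivity) this)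
      rw [hJ, mw, ← mul_div_assoc]
      simp only
      rw [norm_div, Real.norm_of_nonneg (show 0 ≤ ‖p.2‖ ^ b by positivity)]
      gcongr
      exact diffb _ _
    · push Not at h1
      simp only [hJ]
      rw [hS0 _ h1.1, hS0 _ h1.2]
      simp only [sub_self, mul_zero, zero_div, norm_zero]
      positivity
  have e1 : (∫ p : Euc N × Euc N, (u p.1 - u p.2) * (φ p.1 - φ p.2) / ‖p.1 - p.2‖ ^ b) =
      ∫ p : Euc N × Euc N, J p := by
    have := (measurePreserving_prod_add (volume : Measure (Euc N)) (volume : Measure (Euc N))).integral_comp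
      (MeasurableEquiv.shearAddRight (Euc N)).measurableEmbedding
      (fun p : Euc N × Euc N => (u p.1 - u p.2) * (φ p.1 - φ p.2) / ‖p.1 - p.2‖ ^ b)
    rw [Measure.volume_eq_prod, ← this]
    congr 1
    funext p
    simp [hJ]
  have iw : ∀ a c : Euc N, Integrable (fun y => u (y + a) * φ (y + c)) := fun a c =>
    (hui.comp_add_right a).mul_bdd (c := B)
      (by fun_prop : Continuous fun y => φ (y + c)).aestronglyMeasurable
      (Eventually.of_forall fun y => hB _)
  have e2 : ∀ h : Euc N, ∫ y, J (y, h) =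
      ∫ y, u y * (-(φ (y + h) + φ (y - h) - 2 * φ y) / ‖h‖ ^ b) := by
    intro h
    have t1 : ∫ y, u (y + h) * φ (y + h) = ∫ y, u y * φ y :=
      integral_add_right_eq_self (fun y => u y * φ y) h
    have t2 : ∫ y, u (y + h) * φ y = ∫ y, u y * φ (y - h) := by
      have := integral_add_right_eq_self (μ := volume) (fun y => u y * φ (y - h)) h
      simpa using this
    have i1 : Integrable (fun y => u y * φ y) := by simpa using iw 0 0
    have i2 : Integrable (fun y => u y * φ (y + h)) := by simpa using iw 0 h
    have i3 : Integrable (fun y => u y * φ (y - h)) := by simpa [sub_eq_add_neg] using iw 0 (-h)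
    have i4 : Integrable (fun y => u (y + h) * φ y) := by simpa using iw h 0
    have i5 := iw h h
    have l : ∫ y, (u y - u (y + h)) * (φ y - φ (y + h)) =
        (∫ y, u y * φ y) - (∫ y, u y * φ (y + h)) - (∫ y, u (y + h) * φ y) +
          ∫ y, u (y + h) * φ (y + h) := by
      rw [← integral_sub i1 i2, ← integral_sub (by exact i1.sub i2) i4,
        ← integral_add (by exact (i1.sub i2).sub i4) i5]
      congr 1; funext y; ring
    have r : ∫ y, u y * (-(φ (y + h) + φ (y - h) - 2 * φ y)) =
        (∫ y, u y * φ y) - (∫ y, u y * φ (y + h)) - (∫ y, u y * φ (y - h)) + ∫ y, u y * φ y := by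
      rw [← integral_sub i1 i2, ← integral_sub (by exact i1.sub i2) i3,
        ← integral_add (by exact (i1.sub i2).sub i3) i1]
      congr 1; funext y; ring
    simp only [hJ]
    simp_rw [← mul_div_assoc]
    rw [integral_div, integral_div, l, r, t1, t2]
  have swap : Integrable (Function.uncurry fun (h y : Euc N) =>
      u y * (-(φ (y + h) + φ (y - h) - 2 * φ y) / ‖h‖ ^ b)) (volume.prod volume) := by
    have dom : Integrable (fun p : Euc N × Euc N => (C * mw N s 2 p.1) * u p.2)
      (volume.prod volume) :=
      ((mw_int N hN hs (p := 2) (by linarith)).const_mul C).mul_prod hui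
    refine dom.mono ?_ ?_
    · have m2 := ((fl_meas2 (s := s) hk.continuous).comp measurable_swap).neg
      have : (Function.uncurry fun (h y : Euc N) =>
        u y * (-(φ (y + h) + φ (y - h) - 2 * φ y) / ‖h‖ ^ b)) = fun p => u p.2 *
          (-((fun p : Euc N × Euc N => (φ (p.1 + p.2) + φ (p.1 - p.2) - 2 * φ p.1) / ‖p.2‖ ^ ((N : ℝ) + 2 * s)) ∘ Prod.swap) p) := by
        funext p
        simp only [Function.uncurry, hb, Function.comp, Prod.fst_swap, Prod.snd_swap]
        ring
      rw [this]
      exact (hui.aestronglyMeasurable.comp_snd).mul m2.aestronglyMeasurable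
    · refine Eventually.of_forall fun p => ?_
      simp only [Function.uncurry]
      rw [norm_mul, norm_mul, norm_div, mul_comm, norm_neg]
      gcongr
      rw [Real.norm_of_nonneg (show 0 ≤ ‖p.1‖ ^ b by positivity),
        Real.norm_of_nonneg (mul_nonneg hC0 (mw_nonneg N s 2 _)), mw, ← mul_div_assoc]
      gcongr
      exact hC _ _
  unfold Es
  rw [e1, Measure.volume_eq_prod, integral_prod_symm J hJi]
  simp_rw [e2]
  rw [integral_integral_swap swap, ← integral_const_mul]
  congr 1; funext y
  unfold fracLap
  rw [integral_const_mul]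
  simp_rw [neg_div]
  rw [integral_neg]
  ring

lemma compl_ne {N : ℕ} (hN : 0 < N) {Ω : Set (Euc N)} (hb : Bornology.IsBounded Ω) :
    (Ωᶜ).Nonempty := by
  have : Nonempty (Fin N) := ⟨⟨0, hN⟩⟩
  by_contra h
  rw [Set.not_nonempty_iff_eq_empty, Set.compl_empty_iff] at h
  rw [h] at hb
  exact NormedSpace.unbounded_univ ℝ (Euc N) hb

lemma d_pos {N : ℕ} (hN : 0 < N) {Ω : Set (Euc N)} (ho : IsOpen Ω) (hb : Bornology.IsBounded Ω)
    (z : Euc N) : 0 < infDist z Ωᶜ ↔ z ∈ Ω := by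
  rw [← ho.isClosed_compl.notMem_iff_infDist_pos (compl_ne hN hb)]
  simp

lemma d_zero {N : ℕ} {Ω : Set (Euc N)}
    (z : Euc N) (hz : z ∉ Ω) : infDist z Ωᶜ = 0 := infDist_zero_of_mem hz

lemma d_ball {N : ℕ} {Ω : Set (Euc N)} {z w : Euc N} (h : dist z w < infDist z Ωᶜ) : w ∈ Ω := by
  by_contra hw
  exact absurd (infDist_le_dist_of_mem (s := Ωᶜ) (x := z) hw) (by linarith)

lemma bdist_eq {N : ℕ} (hN : 0 < N) {Ω : Set (Euc N)} (ho : IsOpen Ω) (hb : Bornology.IsBounded Ω)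
    {z : Euc N} (hz : z ∈ Ω) : bdist N Ω z = infDist z Ωᶜ := by
  have hne := compl_ne hN hb
  obtain ⟨q, hq, hzq⟩ := ho.isClosed_compl.exists_infDist_eq_dist hne z
  have hpos := (d_pos hN ho hb z).2 hz
  have hqf : q ∈ frontier Ω := by
    rw [ho.frontier_eq]
    refine ⟨?_, hq⟩
    have : q ∈ closure (ball z (infDist z Ωᶜ)) := by
      rw [closure_ball _ hpos.ne', mem_closedBall, dist_comm, hzq]
    refine closure_mono ?_ this
    intro w hw
    exact d_ball (by rw [dist_comm]; exact hw)
  apply le_antisymm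
  · rw [hzq]; exact infDist_le_dist_of_mem hqf
  · apply infDist_le_infDist_of_subset _ ⟨q, hqf⟩
    rw [ho.frontier_eq]; exact fun w hw => hw.2

lemma sd_eq {N : ℕ} {Ω : Set (Euc N)} {z : Euc N} (hz : z ∈ Ω) :
    signedDistSet N Ω z = infDist z Ωᶜ := by
  simp [signedDistSet, infDist_zero_of_mem hz]

lemma grad_ge {N : ℕ} (hN : 0 < N) {Ω : Set (Euc N)} (ho : IsOpen Ω) (hb : Bornology.IsBounded Ω)
    {z : Euc N} (hz : z ∈ Ω) (hd : DifferentiableAt ℝ (signedDistSet N Ω) z) :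
    1 ≤ ‖gradient (signedDistSet N Ω) z‖ := by
  obtain ⟨q, hq, hzq⟩ := ho.isClosed_compl.exists_infDist_eq_dist (compl_ne hN hb) z
  have hpos := (d_pos hN ho hb z).2 hz
  set D := infDist z Ωᶜ with hD
  set v := q - z with hv
  have hvn : ‖v‖ = D := by rw [hv, hzq, dist_comm, dist_eq_norm]
  have h1 : HasDerivAt (fun t : ℝ => signedDistSet N Ω (z + t • v))
      (inner ℝ (gradient (signedDistSet N Ω) z) v) 0 := by
    have := hd.hasGradientAt.hasFDerivAt.hasLineDerivAt v
    simpa [HasLineDerivAt] using this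
  have h2 := h1.tendsto_slope_zero_right
  have h3 : inner ℝ (gradient (signedDistSet N Ω) z) v ≤ -D := by
    refine le_of_tendsto h2 ?_
    filter_upwards [Ioo_mem_nhdsGT (zero_lt_one' ℝ)] with t ht
    have e1 : dist z (z + t • v) = t * D := by
      rw [dist_eq_norm]; simp [norm_smul, hvn, abs_of_pos ht.1]
    have hm : z + t • v ∈ Ω := d_ball (z := z) (by rw [e1, ← hD]; nlinarith [ht.1, ht.2])
    simp only [zero_add, zero_smul, add_zero, smul_eq_mul]
    rw [sd_eq hm, sd_eq hz, ← hD]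
    have e2 : infDist (z + t • v) Ωᶜ ≤ (1 - t) * D := by
      refine (infDist_le_dist_of_mem hq).trans_eq ?_
      rw [dist_eq_norm, show z + t • v - q = (-(1 - t)) • v by rw [hv]; module, norm_smul, hvn,
        norm_neg, Real.norm_of_nonneg (by linarith [ht.2])]
    rw [inv_mul_le_iff₀ ht.1]
    linarith
  have h4 := abs_real_inner_le_norm (gradient (signedDistSet N Ω) z) v
  rw [hvn] at h4
  have h5 := neg_le_abs (inner ℝ (gradient (signedDistSet N Ω) z) v)
  nlinarith

lemma tube_local {N : ℕ} (hN : 0 < N) {Ω : Set (Euc N)} (hΩ : IsC11 N Ω) {p : Euc N}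
    (hp : p ∈ frontier Ω) : ∃ W ∈ nhds p, ∃ V : ENNReal, V ≠ ⊤ ∧ ∀ ρ : ℝ, 0 < ρ → ρ < 1 →
      volume (W ∩ {z | z ∈ Ω ∧ infDist z Ωᶜ ≤ ρ}) ≤ V * ENNReal.ofReal ρ := by
  obtain ⟨ho, hb, U, hUo, hUf, hUd, K, hK⟩ := hΩ
  set e := gradient (signedDistSet N Ω) p with he
  have hpU := hUf hp
  have he1 : 1 ≤ ‖e‖ := by
    have hc : ContinuousAt (fun z => gradient (signedDistSet N Ω) z) p :=
      hK.continuousOn.continuousAt (hUo.mem_nhds hpU)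
    have : (nhdsWithin p Ω).NeBot := mem_closure_iff_nhdsWithin_neBot.1 (frontier_subset_closure hp)
    refine ge_of_tendsto (hc.norm.tendsto.mono_left nhdsWithin_le_nhds : Tendsto _ (nhdsWithin p Ω) _) ?_
    filter_upwards [self_mem_nhdsWithin, mem_nhdsWithin_of_mem_nhds (hUo.mem_nhds hpU)] with z hz hzU
    exact grad_ge hN ho hb hz (hUd z hzU)
  obtain ⟨R0, hR0, hR0U⟩ := Metric.isOpen_iff.1 hUo p hpU
  set R := min R0 (1 / (2 * (K + 1))) with hR
  have hRpos : 0 < R := by positivity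
  have hKR : K * R ≤ 1 / 2 := by
    have h1 : R ≤ 1 / (2 * (K + 1)) := min_le_right _ _
    have h2 : (0:ℝ) ≤ K := K.2
    calc (K:ℝ) * R ≤ K * (1 / (2 * (K + 1))) := by gcongr
      _ ≤ 1 / 2 := by rw [mul_one_div, div_le_div_iff₀ (by positivity) (by positivity)]; linarith
  have hBU : ball p R ⊆ U := (ball_subset_ball (min_le_left _ _)).trans hR0U
  have hin : ∀ z ∈ ball p R, 1 / 2 ≤ inner ℝ (gradient (signedDistSet N Ω) z) e := by
    intro z hz
    have h1 : ‖gradient (signedDistSet N Ω) z - e‖ ≤ 1 / 2 := by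
      rw [← dist_eq_norm]
      refine (hK.dist_le_mul z (hBU hz) p hpU).trans ?_
      refine le_trans ?_ hKR
      have := (mem_ball.1 hz).le
      gcongr
    have h2 := abs_le.1 (abs_real_inner_le_norm (gradient (signedDistSet N Ω) z - e) e)
    rw [inner_sub_left, real_inner_self_eq_norm_sq] at h2
    nlinarith [h2.1]
  have mono : ∀ z t, 0 < t → z ∈ ball p R → z + t • e ∈ ball p R →
      t / 2 ≤ signedDistSet N Ω (z + t • e) - signedDistSet N Ω z := by
    intro z t ht hz hzt
    have hmem : ∀ τ ∈ Set.Icc 0 t, z + τ • e ∈ ball p R := by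
      intro τ hτ
      have := (convex_ball p R).add_smul_mem hz (y := t • e) hzt (t := τ / t)
        ⟨by have := hτ.1; positivity, by rw [div_le_one ht]; exact hτ.2⟩
      rwa [smul_smul, div_mul_cancel₀ _ ht.ne'] at this
    have hder : ∀ τ ∈ Set.Icc 0 t, HasDerivAt (fun τ : ℝ => signedDistSet N Ω (z + τ • e))
        (inner ℝ (gradient (signedDistSet N Ω) (z + τ • e)) e) τ := by
      intro τ hτ
      have h1 := (hUd _ (hBU (hmem τ hτ))).hasGradientAt.hasFDerivAt
      have h2 : HasDerivAt (fun τ : ℝ => z + τ • e) e τ := by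
        simpa using ((hasDerivAt_id τ).smul_const e).const_add z
      have := h1.comp_hasDerivAt τ h2
      simpa [Function.comp_def] using this
    obtain ⟨c, hc, hce⟩ := exists_hasDerivAt_eq_slope (fun τ : ℝ => signedDistSet N Ω (z + τ • e))
      (fun τ => inner ℝ (gradient (signedDistSet N Ω) (z + τ • e)) e) ht
      (fun τ hτ => (hder τ hτ).continuousAt.continuousWithinAt)
      (fun τ hτ => hder τ (Set.Ioo_subset_Icc_self hτ))
    have h3 := hin _ (hmem c (Set.Ioo_subset_Icc_self hc))
    rw [hce] at h3
    simp only [zero_smul, add_zero, sub_zero] at h3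
    rw [le_div_iff₀ ht] at h3
    linarith
  refine ⟨ball p R, ball_mem_nhds _ hRpos, volume (ball p (R + 4 * ‖e‖)),
    measure_ball_lt_top.ne, fun ρ hρ hρ1 => ?_⟩
  set S := ball p R ∩ {z | z ∈ Ω ∧ infDist z Ωᶜ ≤ ρ} with hS
  have hSm : MeasurableSet S := by
    refine measurableSet_ball.inter (ho.measurableSet.inter ?_)
    exact (isClosed_le (continuous_infDist_pt _) continuous_const).measurableSet
  set J : ℕ := ⌊1 / ρ⌋₊ + 1 with hJ
  have hJ1 : 1 / ρ ≤ J := by rw [hJ]; push_cast; exact (Nat.lt_floor_add_one _).le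
  have hJ2 : (J:ℝ) ≤ 1 / ρ + 1 := by
    rw [hJ]; push_cast; gcongr; exact Nat.floor_le (by positivity)
  set T : ℕ → Set (Euc N) := fun j => (fun h => h + (-((j:ℝ) * (2 * ρ))) • e) ⁻¹' S with hT
  have hTv : ∀ j, volume (T j) = volume S := fun j => measure_preimage_add_right _ _ _
  have hTm : ∀ j, MeasurableSet (T j) := fun j => by
    apply hSm.preimage; fun_prop
  have dis : ∀ i j : ℕ, i < j → Disjoint (T i) (T j) := by
    intro i j hij
    rw [Set.disjoint_left]
    intro w hi hj
    simp only [hT, Set.mem_preimage] at hi hj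
    have hij' : (1:ℝ) ≤ (j:ℝ) - i := by
      have : (i:ℝ) + 1 ≤ j := by exact_mod_cast hij
      linarith
    have e1 : w + (-((i:ℝ) * (2 * ρ))) • e = w + (-((j:ℝ) * (2 * ρ))) • e + (((j:ℝ) - i) * (2 * ρ)) • e := by
      module
    have h1 := mono _ (((j:ℝ) - i) * (2 * ρ)) (by nlinarith) hj.1 (by rw [← e1]; exact hi.1)
    rw [← e1, sd_eq hi.2.1, sd_eq hj.2.1] at h1
    have h2 := hi.2.2
    have h3 := (d_pos hN ho hb _).2 hj.2.1
    nlinarith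
  have hsub : (⋃ j ∈ Finset.range J, T j) ⊆ ball p (R + 4 * ‖e‖) := by
    intro w hw
    simp only [Set.mem_iUnion, Finset.mem_range] at hw
    obtain ⟨j, hj, hw⟩ := hw
    have h1 := hw.1
    rw [mem_ball, dist_eq_norm] at h1 ⊢
    have h2 : ‖w - p‖ ≤ ‖w + (-((j:ℝ) * (2 * ρ))) • e - p‖ + ‖((j:ℝ) * (2 * ρ)) • e‖ := by
      refine le_trans (le_of_eq ?_) (norm_add_le _ _)
      congr 1; module
    rw [norm_smul, Real.norm_of_nonneg (by positivity)] at h2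
    have h3 : (j:ℝ) * (2 * ρ) ≤ 4 := by
      have : (j:ℝ) ≤ J := by exact_mod_cast hj.le
      have h4 : (j:ℝ) * ρ ≤ (1 / ρ + 1) * ρ := by gcongr; linarith
      rw [add_mul, one_div_mul_cancel hρ.ne'] at h4
      linarith
    nlinarith
  have hsum : (J:ENNReal) * volume S ≤ volume (ball p (R + 4 * ‖e‖)) := by
    refine le_trans (le_of_eq ?_) (measure_mono hsub)
    rw [measure_biUnion_finset]
    · simp [hTv]
    · intro i _ j _ hne
      rcases lt_or_gt_of_ne hne with h | h
      · exact dis i j h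
      · exact (dis j i h).symm
    · intro j _; exact hTm j
  have hJr : 1 ≤ ENNReal.ofReal ρ * (J:ENNReal) := by
    rw [← ENNReal.ofReal_natCast, ← ENNReal.ofReal_mul hρ.le, ENNReal.one_le_ofReal]
    rw [div_le_iff₀ hρ] at hJ1
    linarith
  calc volume S ≤ (ENNReal.ofReal ρ * (J:ENNReal)) * volume S := le_mul_of_one_le_left (by positivity) hJr
    _ = ENNReal.ofReal ρ * ((J:ENNReal) * volume S) := by ring
    _ ≤ ENNReal.ofReal ρ * volume (ball p (R + 4 * ‖e‖)) := by gcongr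
    _ = _ := by ring

lemma nbhd_frontier {N : ℕ} (hN : 0 < N) {Ω : Set (Euc N)} (ho : IsOpen Ω)
    (hb : Bornology.IsBounded Ω) {W : Set (Euc N)} (hW : W ∈ nhdsSet (frontier Ω)) :
    ∃ ε : ℝ, 0 < ε ∧ ∀ z ∈ Ω, infDist z Ωᶜ < ε → z ∈ W := by
  have hc : IsCompact (frontier Ω) :=
    Metric.isCompact_of_isClosed_isBounded isClosed_frontier
      (hb.closure.subset frontier_subset_closure)
  obtain ⟨O, hO, hfO, hOW⟩ := mem_nhdsSet_iff_exists.1 hW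
  obtain ⟨ε, hε, hsub⟩ := hc.exists_thickening_subset_open hO hfO
  refine ⟨ε, hε, fun z hz hd => hOW (hsub ?_)⟩
  rw [← bdist_eq hN ho hb hz, bdist] at hd
  have hne : (frontier Ω).Nonempty := by
    have : Nonempty (Fin N) := ⟨⟨0, hN⟩⟩
    rw [nonempty_frontier_iff]
    refine ⟨⟨z, hz⟩, fun h => ?_⟩
    have := compl_ne hN hb
    simp [h] at this
  rw [mem_thickening_iff]
  exact (infDist_lt_iff hne).1 hd

lemma tube {N : ℕ} (hN : 0 < N) {Ω : Set (Euc N)} (hΩ : IsC11 N Ω) :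
    ∃ CV : ℝ, 0 ≤ CV ∧ ∀ ρ : ℝ, 0 < ρ →
      (volume : Measure (Euc N)).real {z | z ∈ Ω ∧ infDist z Ωᶜ ≤ ρ} ≤ CV * ρ := by
  have ho := hΩ.1
  have hb := hΩ.2.1
  have hc : IsCompact (frontier Ω) :=
    Metric.isCompact_of_isClosed_isBounded isClosed_frontier
      (hb.closure.subset frontier_subset_closure)
  have key : ∃ W ∈ nhdsSet (frontier Ω), ∃ V : ENNReal, V ≠ ⊤ ∧ ∀ ρ : ℝ, 0 < ρ → ρ < 1 →
      volume (W ∩ {z | z ∈ Ω ∧ infDist z Ωᶜ ≤ ρ}) ≤ V * ENNReal.ofReal ρ := by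
    refine hc.induction_on (p := fun t => ∃ W ∈ nhdsSet t, ∃ V : ENNReal, V ≠ ⊤ ∧ ∀ ρ : ℝ, 0 < ρ → ρ < 1 →
      volume (W ∩ {z | z ∈ Ω ∧ infDist z Ωᶜ ≤ ρ}) ≤ V * ENNReal.ofReal ρ) ?_ ?_ ?_ ?_
    · exact ⟨∅, by simp, 0, by simp, by simp⟩
    · rintro s t hst ⟨W, hW, h⟩
      exact ⟨W, nhdsSet_mono hst hW, h⟩
    · rintro s t ⟨W, hW, V, hV, h⟩ ⟨W', hW', V', hV', h'⟩
      refine ⟨W ∪ W', ?_, V + V', by simp [hV, hV'], fun ρ h0 h1 => ?_⟩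
      · rw [nhdsSet_union]; exact union_mem_sup hW hW'
      · rw [Set.union_inter_distrib_right, add_mul]
        exact (measure_union_le _ _).trans (add_le_add (h ρ h0 h1) (h' ρ h0 h1))
    · intro p hp
      obtain ⟨W, hW, V, hV, h⟩ := tube_local hN hΩ hp
      obtain ⟨O, hOW, hO, hpO⟩ := _root_.mem_nhds_iff.1 hW
      exact ⟨O, mem_nhdsWithin_of_mem_nhds (hO.mem_nhds hpO), W,
        mem_nhdsSet_iff_exists.2 ⟨O, hO, subset_rfl, hOW⟩, V, hV, h⟩
  obtain ⟨W, hW, V, hV, h⟩ := key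
  obtain ⟨ε, hε, hεW⟩ := nbhd_frontier hN ho hb hW
  set r := min ε 1 with hr
  have hr0 : 0 < r := by positivity
  set VΩ := (volume : Measure (Euc N)).real Ω with hVΩ
  have hΩfin : volume Ω ≠ ⊤ := hb.measure_lt_top.ne
  have hVΩ0 : 0 ≤ VΩ := measureReal_nonneg
  refine ⟨V.toReal + VΩ / r, by positivity, fun ρ hρ => ?_⟩
  rcases lt_or_ge ρ r with h1 | h1
  · have e : {z | z ∈ Ω ∧ infDist z Ωᶜ ≤ ρ} = W ∩ {z | z ∈ Ω ∧ infDist z Ωᶜ ≤ ρ} := by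
      symm; apply Set.inter_eq_right.2
      rintro z ⟨hz, hzd⟩
      exact hεW z hz (hzd.trans_lt (h1.trans_le (min_le_left _ _)))
    rw [e]
    have h2 := h ρ hρ (h1.trans_le (min_le_right _ _))
    have h3 := ENNReal.toReal_mono (ENNReal.mul_ne_top hV ENNReal.ofReal_ne_top) h2
    rw [ENNReal.toReal_mul, ENNReal.toReal_ofReal hρ.le] at h3
    rw [measureReal_def]
    refine h3.trans ?_
    gcongr
    have : 0 ≤ VΩ / r := by positivity
    linarith
  · have h2 : (volume : Measure (Euc N)).real {z | z ∈ Ω ∧ infDist z Ωᶜ ≤ ρ} ≤ VΩ :=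
      measureReal_mono (fun z hz => hz.1) hΩfin
    refine h2.trans ?_
    have h3 : VΩ ≤ VΩ / r * ρ := by
      rw [div_mul_eq_mul_div, le_div_iff₀ hr0]; gcongr
    have h4 : 0 ≤ V.toReal * ρ := by positivity
    linarith

lemma unif_trace {N : ℕ} (hN : 0 < N) {s : ℝ} {Ω : Set (Euc N)} (ho : IsOpen Ω)
    (hb : Bornology.IsBounded Ω) {u gu : Euc N → ℝ} (hgu : HasFracTrace N s Ω u gu)
    (hgu0 : ∀ θ ∈ frontier Ω, gu θ = 0) {τ : ℝ} (hτ : 0 < τ) :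
    ∃ ε : ℝ, 0 < ε ∧ ∀ z ∈ Ω, infDist z Ωᶜ < ε → |u z| ≤ τ * infDist z Ωᶜ ^ s := by
  have hW : {z | z ∈ Ω → |u z| ≤ τ * infDist z Ωᶜ ^ s} ∈ nhdsSet (frontier Ω) := by
    rw [mem_nhdsSet_iff_forall]
    intro p hp
    have h := hgu.2 p hp
    rw [hgu0 p hp] at h
    have h2 := h.norm.eventually_lt_const (show ‖(0:ℝ)‖ < τ by simpa using hτ)
    rw [eventually_nhdsWithin_iff] at h2
    filter_upwards [h2] with z hz hzΩ
    have h3 := (hz hzΩ).le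
    have hd := (d_pos hN ho hb z).2 hzΩ
    rw [bdist_eq hN ho hb hzΩ, norm_div, Real.norm_of_nonneg (show 0 ≤ infDist z Ωᶜ ^ s by positivity),
      div_le_iff₀ (by positivity)] at h3
    exact h3
  obtain ⟨ε, hε, h⟩ := nbhd_frontier hN ho hb hW
  exact ⟨ε, hε, fun z hz hd => h z hz hd hz⟩

lemma ibp_bound {N : ℕ} (hN0 : 0 < N) {s : ℝ} (hs : 1 / 2 < s) (hN : 2 * s < N)
    {Ω : Set (Euc N)} {x : Euc N} {Γ : Euc N → ℝ} (hΓi : Integrable Γ)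
    {C : ℝ} (hC0 : 0 ≤ C) (hΓ0 : ∀ z, z ≠ x → 0 ≤ Γ z)
    (hΓC : ∀ z, z ≠ x → Γ z ≤ C * ‖x - z‖ ^ (2 * s - (N:ℝ)))
    (hΓd : ∀ z ∈ Ω, z ≠ x → DifferentiableAt ℝ Γ z)
    (hΓg : IntegrableOn (fun z => fderiv ℝ Γ z) Ω) {M : ℝ} (hM : ∫ z in Ω, ‖fderiv ℝ Γ z‖ ≤ M)
    {H : Euc N → ℝ} (hH : ContDiff ℝ 1 H) (hHc : HasCompactSupport H) (hHΩ : tsupport H ⊆ Ω)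
    {B : ℝ} (hB : ∀ z, |H z| ≤ B) {e : Euc N} (he : ‖e‖ ≤ 1) :
    |∫ z, Γ z * fderiv ℝ H z e| ≤ M * B := by
  have : Nonempty (Fin N) := ⟨⟨0, hN0⟩⟩
  have hB0 : 0 ≤ B := (abs_nonneg _).trans (hB 0)
  let χ : ContDiffBump (0 : Euc N) := ⟨1, 2, one_pos, one_lt_two⟩
  have hχd : ContDiff ℝ 1 (χ : Euc N → ℝ) := χ.contDiff
  obtain ⟨Cχ, hCχ⟩ := (χ.hasCompactSupport.fderiv (𝕜 := ℝ)).exists_bound_of_continuous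
    (hχd.continuous_fderiv one_ne_zero)
  have hCχ0 : 0 ≤ Cχ := (norm_nonneg _).trans (hCχ 0)
  obtain ⟨BH, hBH⟩ := (hHc.fderiv (𝕜 := ℝ)).exists_bound_of_continuous
    (hH.continuous_fderiv one_ne_zero)
  have hH'c : Continuous fun z => fderiv ℝ H z e :=
    (hH.continuous_fderiv one_ne_zero).clm_apply continuous_const
  have hHint : Integrable fun z => Γ z * fderiv ℝ H z e := by
    refine hΓi.mul_bdd (c := BH) hH'c.aestronglyMeasurable (Eventually.of_forall fun z => ?_)
    refine ((fderiv ℝ H z).le_opNorm e).trans ?_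
    have := hBH z
    nlinarith [norm_nonneg (fderiv ℝ H z)]
  set V : ℝ := (volume : Measure (Euc N)).real (closedBall 0 1) with hV
  -- the bound with a hole
  have hole : ∀ r : ℝ, 0 < r →
      |∫ z, Γ z * fderiv ℝ H z e * (1 - χ (r⁻¹ • (z - x)))| ≤
        M * B + (C * B * Cχ * V * 2 ^ N) * r ^ (2 * s - 1) := by
    intro r hr
    set X : Euc N → ℝ := fun z => χ (r⁻¹ • (z - x)) with hX
    have hXd : ContDiff ℝ 1 X := by
      apply hχd.comp; fun_prop
    have hXf : ∀ z, fderiv ℝ X z e = r⁻¹ * fderiv ℝ χ (r⁻¹ • (z - x)) e := by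
      intro z
      have h1 : HasFDerivAt (fun z : Euc N => r⁻¹ • (z - x)) (r⁻¹ • ContinuousLinearMap.id ℝ (Euc N)) z :=
        ((hasFDerivAt_id z).sub_const x).const_smul r⁻¹
      have h2 := ((hχd.differentiable one_ne_zero (r⁻¹ • (z - x))).hasFDerivAt).comp z h1
      rw [show X = χ ∘ fun z : Euc N => r⁻¹ • (z - x) from rfl, h2.fderiv]
      simp
    set T : Euc N → ℝ := fun z => H z * (1 - X z) with hT
    have hTd : ContDiff ℝ 1 T := hH.mul (contDiff_const.sub hXd)
    have hXn : ∀ z, ‖r⁻¹ • (z - x)‖ = ‖z - x‖ / r := fun z => by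
      rw [norm_smul, norm_inv, Real.norm_of_nonneg hr.le]; field_simp
    have hTloc : ∀ z, ¬ (z ∈ Ω ∧ z ≠ x) → T =ᶠ[nhds z] 0 := by
      intro z hz
      by_cases hzx : z = x
      · subst hzx
        filter_upwards [ball_mem_nhds z hr] with w hw
        have : X w = 1 := by
          apply χ.one_of_mem_closedBall
          rw [mem_closedBall_zero_iff, hXn]
          change _ ≤ (1:ℝ)
          rw [div_le_one hr, ← dist_eq_norm]
          exact (mem_ball.1 hw).le
        simp [hT, this]
      · have hzΩ : z ∉ Ω := fun h => hz ⟨h, hzx⟩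
        have := notMem_tsupport_iff_eventuallyEq.1 (fun h => hzΩ (hHΩ h))
        filter_upwards [this] with w hw
        simp [hT, hw]
    have hP : ∀ z, HasFDerivAt (fun z => T z * Γ z) (T z • fderiv ℝ Γ z + Γ z • fderiv ℝ T z) z := by
      intro z
      by_cases hz : z ∈ Ω ∧ z ≠ x
      · exact ((hTd.differentiable one_ne_zero z).hasFDerivAt).mul (hΓd z hz.1 hz.2).hasFDerivAt
      · have h1 := hTloc z hz
        have h2 : T z = 0 := h1.eq_of_nhds
        have h3 : fderiv ℝ T z = 0 := by rw [h1.fderiv_eq]; simp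
        rw [h2, h3]
        simp only [zero_smul, smul_zero, add_zero]
        have h4 : (fun z => T z * Γ z) =ᶠ[nhds z] fun _ => (0:ℝ) := by
          filter_upwards [h1] with w hw
          simp [hw]
        exact (hasFDerivAt_const (0:ℝ) z).congr_of_eventuallyEq h4
    have hTsup : Function.support T ⊆ Ω := by
      intro z hz
      by_contra h
      exact hz (hTloc z (fun h' => h h'.1)).eq_of_nhds
    have hX01 : ∀ z, 0 ≤ X z ∧ X z ≤ 1 := fun z => ⟨χ.nonneg, χ.le_one⟩
    have hTB : ∀ z, |T z| ≤ B := by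
      intro z
      rw [hT]; simp only
      rw [abs_mul, abs_of_nonneg (show 0 ≤ 1 - X z by linarith [(hX01 z).2])]
      have := hB z
      nlinarith [abs_nonneg (H z), (hX01 z).1]
    have hTc : HasCompactSupport T := hHc.mul_right
    obtain ⟨BT, hBT⟩ := hTc.exists_bound_of_continuous hTd.continuous
    obtain ⟨BT', hBT'⟩ := (hTc.fderiv (𝕜 := ℝ)).exists_bound_of_continuous
      (hTd.continuous_fderiv one_ne_zero)
    have i1Ω : IntegrableOn (fun z => T z * fderiv ℝ Γ z e) Ω := by
      refine Integrable.bdd_mul (c := BT) ?_ hTd.continuous.aestronglyMeasurable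
        (Eventually.of_forall hBT)
      exact hΓg.apply_continuousLinearMap e
    have sup1 : Function.support (fun z => T z * fderiv ℝ Γ z e) ⊆ Ω := by
      refine subset_trans ?_ hTsup
      intro z hz h
      exact hz (by simp [h])
    have i1 : Integrable (fun z => T z * fderiv ℝ Γ z e) :=
      (integrableOn_iff_integrable_of_support_subset sup1).1 i1Ω
    have hT'c : Continuous fun z => fderiv ℝ T z e :=
      (hTd.continuous_fderiv one_ne_zero).clm_apply continuous_const
    have i2 : Integrable (fun z => Γ z * fderiv ℝ T z e) := by
      refine hΓi.mul_bdd (c := BT' * ‖e‖) hT'c.aestronglyMeasurable (Eventually.of_forall fun z => ?_)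
      exact ((fderiv ℝ T z).le_opNorm e).trans (by gcongr; exact hBT' z)
    have hP0 : ∫ z, (T z * fderiv ℝ Γ z e + Γ z * fderiv ℝ T z e) = 0 := by
      have hd : Differentiable ℝ (fun z => T z * Γ z) := fun z => (hP z).differentiableAt
      have hfe : ∀ z, fderiv ℝ (fun z => T z * Γ z) z e = T z * fderiv ℝ Γ z e + Γ z * fderiv ℝ T z e := by
        intro z; rw [(hP z).fderiv]; simp
      have := integral_mul_fderiv_eq_neg_fderiv_mul_of_integrable (μ := (volume : Measure (Euc N)))
        (f := fun z => T z * Γ z) (g := fun _ => (1:ℝ)) (v := e) (by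
          simp only [mul_one]
          simp_rw [hfe]
          exact i1.add i2) (by simp) (by
          simp only [mul_one]
          exact hΓi.bdd_mul (c := BT) hTd.continuous.aestronglyMeasurable
            (Eventually.of_forall hBT)) (fun z _ => hd z) (fun z _ => differentiableAt_const _)
      simp only [mul_one] at this
      simp_rw [hfe] at this
      simpa using this
    have hT' : ∀ z, fderiv ℝ T z e = fderiv ℝ H z e * (1 - X z) - H z * fderiv ℝ X z e := by
      intro z
      have h1 := ((hH.differentiable one_ne_zero z).hasFDerivAt).mul
        ((hXd.differentiable one_ne_zero z).hasFDerivAt.const_sub 1)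
      rw [show T = H * fun z => 1 - X z from rfl, h1.fderiv]
      simp; ring
    -- the commutator
    set c : ℝ := C * r ^ (2 * s - (N:ℝ)) * B * (r⁻¹ * Cχ) with hc
    have hc0 : 0 ≤ c := by positivity
    have comm : ∀ z, ‖Γ z * (H z * fderiv ℝ X z e)‖ ≤ (closedBall x (2 * r)).indicator (fun _ => c) z := by
      intro z
      have hzero : (‖z - x‖ < r ∨ 2 * r < ‖z - x‖) → fderiv ℝ X z e = 0 := by
        intro h
        rw [hXf]
        have : fderiv ℝ χ (r⁻¹ • (z - x)) = 0 := by
          rcases h with h | h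
          · have h1 : (χ : Euc N → ℝ) =ᶠ[nhds (r⁻¹ • (z - x))] fun _ => 1 := by
              apply χ.eventuallyEq_one_of_mem_ball
              rw [mem_ball_zero_iff, hXn]
              change _ < (1:ℝ)
              rwa [div_lt_one hr]
            rw [h1.fderiv_eq]; simp
          · apply image_eq_zero_of_notMem_tsupport
            intro h2
            have h3 := tsupport_fderiv_subset ℝ h2
            rw [χ.tsupport_eq, mem_closedBall_zero_iff, hXn] at h3
            change _ ≤ (2:ℝ) at h3
            rw [div_le_iff₀ hr] at h3
            linarith
        rw [this]; simp
      by_cases h : ‖z - x‖ < r ∨ 2 * r < ‖z - x‖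
      · rw [hzero h]
        simp only [mul_zero, norm_zero]
        exact Set.indicator_nonneg (fun _ _ => hc0) _
      · push Not at h
        have hz : z ∈ closedBall x (2 * r) := by rw [mem_closedBall, dist_eq_norm]; exact h.2
        have hzx : z ≠ x := by
          rintro rfl
          simp at h; linarith [h.1]
        rw [Set.indicator_of_mem hz, norm_mul, norm_mul, hc, mul_assoc (C * _)]
        have g1 : ‖Γ z‖ ≤ C * r ^ (2 * s - (N:ℝ)) := by
          rw [Real.norm_of_nonneg (hΓ0 z hzx)]
          refine (hΓC z hzx).trans ?_
          gcongr 1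
          rw [norm_sub_rev]
          exact Real.rpow_le_rpow_of_nonpos hr h.1 (by linarith)
        have g2 : ‖fderiv ℝ X z e‖ ≤ r⁻¹ * Cχ := by
          rw [hXf, norm_mul, Real.norm_of_nonneg (show 0 ≤ r⁻¹ by positivity)]
          gcongr
          refine ((fderiv ℝ χ _).le_opNorm e).trans ?_
          have := hCχ (r⁻¹ • (z - x))
          nlinarith [norm_nonneg (fderiv ℝ χ (r⁻¹ • (z - x)))]
        have g3 : ‖H z‖ ≤ B := hB z
        gcongr
    have ind_int : Integrable ((closedBall x (2 * r)).indicator (fun _ => c)) :=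
      (integrable_indicator_iff measurableSet_closedBall).2
        (integrableOn_const (measure_closedBall_lt_top.ne))
    have ind_val : ∫ z, (closedBall x (2 * r)).indicator (fun _ => c) z =
        (C * B * Cχ * V * 2 ^ N) * r ^ (2 * s - 1) := by
      rw [integral_indicator measurableSet_closedBall, setIntegral_const, smul_eq_mul,
        measureReal_def, Measure.addHaar_closedBall' _ _ (by positivity), ENNReal.toReal_mul,
        ENNReal.toReal_ofReal (by positivity), ← measureReal_def, ← hV, finrank_euclideanSpace,
        Fintype.card_fin, hc, mul_pow]
      have : r ^ (2 * s - 1) = r ^ N * r ^ (2 * s - (N:ℝ)) * r⁻¹ := by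
        rw [← Real.rpow_natCast r N, ← Real.rpow_add hr, ← Real.rpow_neg_one r, ← Real.rpow_add hr]
        congr 1; ring
      rw [this]; ring
    have hX'c : Continuous fun z => fderiv ℝ X z e :=
      (hXd.continuous_fderiv one_ne_zero).clm_apply continuous_const
    have i3 : Integrable (fun z => Γ z * (H z * fderiv ℝ X z e)) :=
      ind_int.mono' (hΓi.aestronglyMeasurable.mul
        (hH.continuous.mul hX'c).aestronglyMeasurable) (Eventually.of_forall comm)
    have eqn : ∫ z, Γ z * fderiv ℝ H z e * (1 - X z) =
        -(∫ z, T z * fderiv ℝ Γ z e) + ∫ z, Γ z * (H z * fderiv ℝ X z e) := by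
      rw [integral_add i1 i2] at hP0
      have : ∫ z, Γ z * fderiv ℝ H z e * (1 - X z) =
          (∫ z, Γ z * fderiv ℝ T z e) + ∫ z, Γ z * (H z * fderiv ℝ X z e) := by
        rw [← integral_add i2 i3]
        congr 1; funext z; rw [hT' z]; ring
      rw [this]; linarith
    rw [eqn]
    refine (abs_add_le _ _).trans ?_
    rw [abs_neg]
    gcongr
    · rw [← setIntegral_eq_integral_of_forall_compl_eq_zero (s := Ω)
        (fun z hz => by by_contra h; exact hz (sup1 h))]
      calc |∫ z in Ω, T z * fderiv ℝ Γ z e| ≤ ∫ z in Ω, ‖fderiv ℝ Γ z‖ * B := by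
            rw [← Real.norm_eq_abs]
            refine norm_integral_le_of_norm_le (hΓg.norm.mul_const B) (Eventually.of_forall fun z => ?_)
            rw [norm_mul, mul_comm]
            have h1 := (fderiv ℝ Γ z).le_opNorm e
            have h2 : ‖T z‖ ≤ B := hTB z
            gcongr
            nlinarith [norm_nonneg (fderiv ℝ Γ z)]
        _ = (∫ z in Ω, ‖fderiv ℝ Γ z‖) * B := integral_mul_const _ _
        _ ≤ M * B := by gcongr
    · rw [← ind_val, ← Real.norm_eq_abs]
      exact norm_integral_le_of_norm_le ind_int (Eventually.of_forall comm)
  -- let r tend to 0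
  have lim1 : Tendsto (fun r : ℝ => ∫ z, Γ z * fderiv ℝ H z e * (1 - χ (r⁻¹ • (z - x))))
      (nhdsWithin 0 (Set.Ioi 0)) (nhds (∫ z, Γ z * fderiv ℝ H z e)) := by
    refine tendsto_integral_filter_of_dominated_convergence (fun z => ‖Γ z * fderiv ℝ H z e‖) ?_ ?_
      hHint.norm ?_
    · refine Eventually.of_forall fun r => hHint.aestronglyMeasurable.mul ?_
      have := χ.continuous
      exact (by fun_prop : Continuous fun z => 1 - χ (r⁻¹ • (z - x))).aestronglyMeasurable
    · refine Eventually.of_forall fun r => Eventually.of_forall fun z => ?_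
      rw [norm_mul]
      have h1 : ‖1 - χ (r⁻¹ • (z - x))‖ ≤ 1 := by
        rw [Real.norm_eq_abs, abs_le]
        constructor <;> linarith [χ.nonneg (x := r⁻¹ • (z - x)), χ.le_one (x := r⁻¹ • (z - x))]
      exact mul_le_of_le_one_right (norm_nonneg _) h1
    · have : ∀ᵐ z : Euc N, z ≠ x := compl_mem_ae_iff.2 (measure_singleton x)
      filter_upwards [this] with z hz
      have hpos : 0 < ‖z - x‖ := norm_pos_iff.2 (sub_ne_zero.2 hz)
      refine tendsto_const_nhds.congr' ?_
      filter_upwards [Ioo_mem_nhdsGT (show 0 < ‖z - x‖ / 2 by positivity)] with r hr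
      rw [χ.zero_of_le_dist]
      · ring
      · change (2:ℝ) ≤ _
        rw [dist_zero_right, norm_smul, norm_inv, Real.norm_of_nonneg hr.1.le, inv_mul_eq_div,
          le_div_iff₀ hr.1]
        linarith [hr.2]
  have lim2 : Tendsto (fun r : ℝ => M * B + (C * B * Cχ * V * 2 ^ N) * r ^ (2 * s - 1))
      (nhdsWithin 0 (Set.Ioi 0)) (nhds (M * B)) := by
    have h1 : Tendsto (fun r : ℝ => r ^ (2 * s - 1)) (nhdsWithin 0 (Set.Ioi 0)) (nhds 0) := by
      have := (Real.continuousAt_rpow_const 0 (2 * s - 1) (Or.inr (by linarith))).tendsto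
      rw [Real.zero_rpow (by linarith)] at this
      exact this.mono_left nhdsWithin_le_nhds
    have := (h1.const_mul (C * B * Cχ * V * 2 ^ N)).const_add (M * B)
    simpa using this
  refine le_of_tendsto_of_tendsto lim1.abs lim2 ?_
  filter_upwards [self_mem_nhdsWithin] with r hr
  exact hole r hr

lemma kappa_exists {N : ℕ} (hN0 : 0 < N) : ∃ κ : Euc N → ℝ, ContDiff ℝ (⊤ : ℕ∞) κ ∧
    (∀ y, 1 ≤ ‖y‖ → κ y = 0) ∧ (∀ y, 0 ≤ κ y) ∧ (∫ y, κ y = 1) ∧ HasCompactSupport κ := by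
  have : Nonempty (Fin N) := ⟨⟨0, hN0⟩⟩
  let χ : ContDiffBump (0 : Euc N) := ⟨1/2, 1, by norm_num, by norm_num⟩
  refine ⟨χ.normed volume, χ.contDiff_normed, fun y hy => ?_, fun y => χ.nonneg_normed y,
    χ.integral_normed, χ.hasCompactSupport_normed⟩
  by_contra h
  have : y ∈ Function.support (χ.normed volume) := h
  rw [χ.support_normed_eq, mem_ball_zero_iff] at this
  change _ < (1:ℝ) at this
  linarith

lemma conv_smooth {N : ℕ} {w k : Euc N → ℝ} (hw : Integrable w) (hk : ContDiff ℝ (⊤ : ℕ∞) k)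
    (hc : HasCompactSupport k) :
    ContDiff ℝ (⊤ : ℕ∞) (fun z => ∫ y, w y * k (z - y)) ∧
    ∀ z e, fderiv ℝ (fun z => ∫ y, w y * k (z - y)) z e = ∫ y, w y * fderiv ℝ k (z - y) e := by
  have h0 : (fun z => ∫ y, w y * k (z - y)) = convolution w k (ContinuousLinearMap.mul ℝ ℝ) volume := by
    funext z; rfl
  refine ⟨?_, fun z e => ?_⟩
  · rw [h0]
    exact hc.contDiff_convolution_right _ hw.locallyIntegrable hk
  · rw [h0, (hc.hasFDerivAt_convolution_right _ hw.locallyIntegrable (hk.of_le (by norm_cast)) z).fderiv]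
    rw [convolution_precompR_apply _ hw.locallyIntegrable (hc.fderiv ℝ)
      (hk.continuous_fderiv (by simp))]
    rfl

lemma conv_tsupp {N : ℕ} {Ω : Set (Euc N)} (hN0 : 0 < N) (ho : IsOpen Ω) (hb : Bornology.IsBounded Ω)
    {w k : Euc N → ℝ} {ρ a : ℝ} (ha : ρ < a) (hw : ∀ y, infDist y Ωᶜ ≤ a → w y = 0)
    (hk : ∀ y, ρ < ‖y‖ → k y = 0) :
    HasCompactSupport (fun z => ∫ y, w y * k (z - y)) ∧
    tsupport (fun z => ∫ y, w y * k (z - y)) ⊆ {z | a - ρ ≤ infDist z Ωᶜ} ∧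
    {z | a - ρ ≤ infDist z Ωᶜ} ⊆ Ω := by
  have hcl : IsClosed {z : Euc N | a - ρ ≤ infDist z Ωᶜ} :=
    isClosed_le continuous_const (continuous_infDist_pt _)
  have hsub : {z : Euc N | a - ρ ≤ infDist z Ωᶜ} ⊆ Ω := by
    intro z hz
    exact (d_pos hN0 ho hb z).1 (by have : a - ρ ≤ infDist z Ωᶜ := hz; linarith)
  have hts : tsupport (fun z => ∫ y, w y * k (z - y)) ⊆ {z | a - ρ ≤ infDist z Ωᶜ} := by
    refine closure_minimal ?_ hcl
    intro z hz
    by_contra h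
    apply hz
    have h' : infDist z Ωᶜ < a - ρ := not_le.1 h
    have : ∀ y, w y * k (z - y) = 0 := by
      intro y
      by_cases h1 : infDist y Ωᶜ ≤ a
      · rw [hw y h1, zero_mul]
      · rw [hk (z - y), mul_zero]
        have := infDist_le_infDist_add_dist (s := Ωᶜ) (x := y) (y := z)
        rw [dist_comm, dist_eq_norm] at this
        push Not at h1
        linarith
    simp [this]
  refine ⟨?_, hts, hsub⟩
  exact HasCompactSupport.of_support_subset_isCompact
    (isCompact_of_isClosed_isBounded hcl (hb.subset hsub)) (subset_closure.trans hts)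

section dker
variable {N : ℕ} {s : ℝ}

/-- rescaled mollifier -/
def kap (κ : Euc N → ℝ) (ρ : ℝ) (y : Euc N) : ℝ := (ρ ^ N)⁻¹ * κ (ρ⁻¹ • y)
/-- rescaled derivative kernel -/
def dker (k : Euc N → ℝ) (ρ : ℝ) (y : Euc N) : ℝ := (ρ ^ (N + 1))⁻¹ * k (ρ⁻¹ • y)

lemma kap_smooth {κ : Euc N → ℝ} (h : ContDiff ℝ (⊤ : ℕ∞) κ) (ρ : ℝ) :
    ContDiff ℝ (⊤ : ℕ∞) (kap κ ρ) := by
  unfold kap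
  exact contDiff_const.mul (h.comp (contDiff_const_smul _))

lemma ker_smooth {κ : Euc N → ℝ} (h : ContDiff ℝ (⊤ : ℕ∞) κ) (ρ : ℝ) :
    ContDiff ℝ (⊤ : ℕ∞) (dker κ ρ) := by
  unfold dker
  exact contDiff_const.mul (h.comp (contDiff_const_smul _))

lemma scale_zero {κ : Euc N → ℝ} (h : ∀ y, 1 < ‖y‖ → κ y = 0) {ρ : ℝ} (hρ : 0 < ρ) (y : Euc N)
    (hy : ρ < ‖y‖) : κ (ρ⁻¹ • y) = 0 := by
  apply h
  rw [norm_smul, norm_inv, Real.norm_of_nonneg hρ.le, inv_mul_eq_div, one_lt_div hρ]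
  exact hy

lemma kap_zero {κ : Euc N → ℝ} (h : ∀ y, 1 < ‖y‖ → κ y = 0) {ρ : ℝ} (hρ : 0 < ρ) (y : Euc N)
    (hy : ρ < ‖y‖) : kap κ ρ y = 0 := by
  rw [kap, scale_zero h hρ y hy, mul_zero]

lemma ker_zero {κ : Euc N → ℝ} (h : ∀ y, 1 < ‖y‖ → κ y = 0) {ρ : ℝ} (hρ : 0 < ρ) (y : Euc N)
    (hy : ρ < ‖y‖) : dker κ ρ y = 0 := by
  rw [dker, scale_zero h hρ y hy, mul_zero]

lemma hcs_of_zero {k : Euc N → ℝ} {ρ : ℝ} (h : ∀ y, ρ < ‖y‖ → k y = 0) : HasCompactSupport k := by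
  refine HasCompactSupport.of_support_subset_isCompact (isCompact_closedBall (0 : Euc N) ρ) ?_
  intro y hy
  rw [mem_closedBall_zero_iff]
  by_contra h'
  exact hy (h y (not_le.1 h'))

lemma kap_fderiv {κ : Euc N → ℝ} (h : ContDiff ℝ (⊤ : ℕ∞) κ) (ρ : ℝ) (y e : Euc N) :
    fderiv ℝ (kap κ ρ) y e = dker (fun w => fderiv ℝ κ w e) ρ y := by
  have h1 : HasFDerivAt (fun z : Euc N => ρ⁻¹ • z) (ρ⁻¹ • ContinuousLinearMap.id ℝ (Euc N)) y :=
    (hasFDerivAt_id y).const_smul ρ⁻¹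
  have h2 := (((h.differentiable (by simp) (ρ⁻¹ • y)).hasFDerivAt).comp y h1).const_mul (ρ ^ N)⁻¹
  have h3 : kap κ ρ = fun y => (ρ ^ N)⁻¹ * (κ ∘ fun z : Euc N => ρ⁻¹ • z) y := rfl
  rw [h3, h2.fderiv, dker]
  simp [pow_succ]
  ring

lemma Q_bound (hN : 0 < N) (hs : 0 < s) (hs1 : s < 1) {k : Euc N → ℝ}
    (hk : ContDiff ℝ (⊤ : ℕ∞) k) (h0 : ∀ y, 1 < ‖y‖ → k y = 0) :
    ∃ C, 0 ≤ C ∧ ∀ ρ > 0, ∀ y, |fracLap N s (dker k ρ) y| ≤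
      C * ρ⁻¹ * (ρ + ‖y‖) ^ (-((N:ℝ) + 2 * s)) := by
  obtain ⟨C, hC0, hC⟩ := fl_decay hN hs hs1 hk h0
  refine ⟨C, hC0, fun ρ hρ y => ?_⟩
  unfold dker
  rw [fl_scale k hρ, abs_mul, abs_of_nonneg (by positivity)]
  have h1 := hC (ρ⁻¹ • y)
  have h2 : (1 + ‖ρ⁻¹ • y‖) = ρ⁻¹ * (ρ + ‖y‖) := by
    rw [norm_smul, norm_inv, Real.norm_of_nonneg hρ.le]; field_simp
  rw [h2, Real.mul_rpow (by positivity) (by positivity), Real.inv_rpow hρ.le, Real.rpow_neg hρ.le,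
    inv_inv] at h1
  calc _ ≤ (ρ ^ (N + 1))⁻¹ * ρ ^ (-(2 * s)) *
        (C * (ρ ^ ((N:ℝ) + 2 * s) * (ρ + ‖y‖) ^ (-((N:ℝ) + 2 * s)))) := by gcongr
    _ = _ := by
      rw [Real.rpow_add hρ, Real.rpow_neg hρ.le, Real.rpow_natCast, pow_succ]
      have := (Real.rpow_pos_of_pos hρ (2*s)).ne'
      field_simp

lemma integral_scale (F : Euc N → ℝ) {ρ : ℝ} (hρ : 0 < ρ) :
    ∫ y, F (ρ⁻¹ • y) = ρ ^ N * ∫ y, F y := by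
  rw [Measure.integral_comp_inv_smul_of_nonneg _ _ hρ.le]
  simp

lemma ker_abs_int (k : Euc N → ℝ) {ρ : ℝ} (hρ : 0 < ρ) :
    ∫ y, |dker k ρ y| = ρ⁻¹ * ∫ y, |k y| := by
  unfold dker
  simp_rw [abs_mul, abs_of_nonneg (show 0 ≤ (ρ ^ (N+1))⁻¹ by positivity)]
  rw [integral_const_mul, integral_scale (fun y => |k y|) hρ, pow_succ]
  field_simp

lemma kap_int (k : Euc N → ℝ) {ρ : ℝ} (hρ : 0 < ρ) :
    ∫ y, kap k ρ y = ∫ y, k y := by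
  unfold kap
  rw [integral_const_mul, integral_scale (fun y => k y) hρ]
  field_simp

/-- bounded times L1 kernel -/
lemma conv_bound {w k : Euc N → ℝ} {B : ℝ} (hk : Continuous k) (hc : HasCompactSupport k)
    (hB : ∀ y, |w y| ≤ B) (z : Euc N) :
    |∫ y, w y * k (z - y)| ≤ B * ∫ y, |k y| := by
  have h1 : Integrable fun y => |k (z - y)| := ((hk.integrable_of_hasCompactSupport hc).abs).comp_sub_left z
  calc |∫ y, w y * k (z - y)| ≤ ∫ y, B * |k (z - y)| := by
        rw [← Real.norm_eq_abs]
        refine norm_integral_le_of_norm_le (h1.const_mul B) (Eventually.of_forall fun y => ?_)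
        rw [norm_mul]
        exact mul_le_mul_of_nonneg_right (hB y) (abs_nonneg _)
    _ = _ := by rw [integral_const_mul, integral_sub_left_eq_self (fun y => |k y|)]

/-- recover derivative -/
lemma deriv_lim {κ u : Euc N → ℝ} (hκ : ContDiff ℝ (⊤ : ℕ∞) κ) (h0 : ∀ y, 1 ≤ ‖y‖ → κ y = 0)
    (h1 : ∫ y, κ y = 1) {x : Euc N} (hu : DifferentiableAt ℝ u x) (huc : Continuous u) (e : Euc N) :
    Tendsto (fun ρ : ℝ => ∫ y, u y * dker (fun w => fderiv ℝ κ w e) ρ (x - y))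
      (nhdsWithin 0 (Set.Ioi 0)) (nhds (fderiv ℝ u x e)) := by
  set L := fderiv ℝ u x with hL
  set k := fun w => fderiv ℝ κ w e with hk
  have hκc : HasCompactSupport κ := hcs_of_zero (ρ := 1) fun y hy => h0 y hy.le
  have kc : Continuous k := (hκ.continuous_fderiv (by simp)).clm_apply continuous_const
  have k0 : ∀ y, 1 < ‖y‖ → k y = 0 := by
    intro y hy
    have : κ =ᶠ[nhds y] fun _ => 0 := by
      have : {y : Euc N | 1 < ‖y‖} ∈ nhds y := (isOpen_lt continuous_const continuous_norm).mem_nhds hy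
      filter_upwards [this] with z hz
      exact h0 z (le_of_lt hz)
    rw [hk]; simp only
    rw [this.fderiv_eq]; simp
  have kcs : HasCompactSupport k := hcs_of_zero k0
  have ki : Integrable k := kc.integrable_of_hasCompactSupport kcs
  have κi : Integrable κ := hκ.continuous.integrable_of_hasCompactSupport hκc
  have κd : Differentiable ℝ κ := hκ.differentiable (by simp)
  have kLi : Integrable fun v => L v * k v :=
    (L.continuous.mul kc).integrable_of_hasCompactSupport kcs.mul_left
  have κLi : Integrable fun v => L v * κ v :=
    (L.continuous.mul hκ.continuous).integrable_of_hasCompactSupport hκc.mul_left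
  -- moments
  have m0 : ∫ v, k v = 0 := by
    have := integral_mul_fderiv_eq_neg_fderiv_mul_of_integrable (μ := (volume : Measure (Euc N)))
      (f := fun _ => (1:ℝ)) (g := κ) (v := e) (by simp) (by simpa using ki) (by simpa using κi)
      (fun z _ => differentiableAt_const _) (fun z _ => κd z)
    simpa using this
  have m1 : ∫ v, L v * k v = - L e := by
    have := integral_mul_fderiv_eq_neg_fderiv_mul_of_integrable (μ := (volume : Measure (Euc N)))
      (f := fun v => L v) (g := κ) (v := e) (by simpa using κi.const_mul (L e)) (by simpa using kLi)
      (by simpa using κLi)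
      (fun z _ => L.differentiableAt) (fun z _ => κd z)
    rw [this]
    simp only [ContinuousLinearMap.fderiv]
    rw [integral_const_mul, h1, mul_one]
  -- change of variables
  have cv : ∀ ρ : ℝ, 0 < ρ → ∫ y, u y * dker k ρ (x - y) =
      ∫ v, ρ⁻¹ * (u (x - ρ • v) - u x) * k v := by
    intro ρ hρ
    have a1 : ∫ y, u y * dker k ρ (x - y) = ∫ y, u (x - y) * dker k ρ y := by
      rw [← integral_sub_left_eq_self (fun y => u (x - y) * dker k ρ y) volume x]
      simp
    have a2 : ∫ y, u (x - y) * dker k ρ y = ∫ v, ρ⁻¹ * u (x - ρ • v) * k v := by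
      have := integral_scale (fun v => ρ⁻¹ * u (x - ρ • v) * k v) hρ
      have h3 : (ρ^N : ℝ) ≠ 0 := by positivity
      rw [← mul_right_inj' h3, ← this, ← integral_const_mul]
      congr 1; funext y
      rw [dker, smul_smul, mul_inv_cancel₀ hρ.ne', one_smul, pow_succ]
      field_simp
    rw [a1, a2]
    have a3 : ∫ v, ρ⁻¹ * (u (x - ρ • v) - u x) * k v =
        (∫ v, ρ⁻¹ * u (x - ρ • v) * k v) - ∫ v, ρ⁻¹ * u x * k v := by
      rw [← integral_sub]
      · congr 1; funext v; ring
      · refine Continuous.integrable_of_hasCompactSupport ?_ kcs.mul_left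
        fun_prop
      · exact ki.const_mul _
    rw [a3, integral_const_mul, m0]; ring
  have hfd := hu.hasFDerivAt
  have key : Tendsto (fun ρ : ℝ => ∫ v, ρ⁻¹ * (u (x - ρ • v) - u x) * k v)
      (nhdsWithin 0 (Set.Ioi 0)) (nhds (∫ v, - L v * k v)) := by
    obtain ⟨δ, hδ, hlip⟩ : ∃ δ > 0, ∀ h : Euc N, ‖h‖ < δ → |u (x + h) - u x| ≤ (‖L‖ + 1) * ‖h‖ := by
      have := hfd.isLittleO.def one_pos
      rw [Metric.eventually_nhds_iff] at this
      obtain ⟨δ, hδ, h⟩ := this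
      refine ⟨δ, hδ, fun v hv => ?_⟩
      have h2 := @h (x + v) (by simpa using hv)
      rw [add_sub_cancel_left] at h2
      have h3 := L.le_opNorm v
      rw [one_mul] at h2
      rw [Real.norm_eq_abs] at h2 h3
      have : u (x+v) - u x = (u (x+v) - u x - L v) + L v := by ring
      rw [this]
      refine (abs_add_le _ _).trans ?_
      linarith
    refine tendsto_integral_filter_of_dominated_convergence (fun v => (‖L‖+1) * |k v|) ?_ ?_
      (ki.abs.const_mul _) ?_
    · refine Eventually.of_forall fun ρ => Continuous.aestronglyMeasurable ?_
      fun_prop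
    · filter_upwards [Ioo_mem_nhdsGT hδ] with ρ hρ
      refine Eventually.of_forall fun v => ?_
      by_cases hv : 1 < ‖v‖
      · rw [k0 v hv]; simp
      · rw [norm_mul, Real.norm_eq_abs (k v)]
        gcongr
        push Not at hv
        rw [norm_mul, norm_inv, Real.norm_of_nonneg hρ.1.le, inv_mul_le_iff₀ hρ.1]
        have hn : ‖-(ρ • v)‖ = ρ * ‖v‖ := by rw [norm_neg, norm_smul, Real.norm_of_nonneg hρ.1.le]
        have := hlip (-(ρ • v)) (by rw [hn]; nlinarith [hρ.1, hρ.2])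
        rw [← sub_eq_add_neg, hn] at this
        refine this.trans ?_
        have : (‖L‖ + 1) * (ρ * ‖v‖) ≤ (‖L‖ + 1) * (ρ * 1) := by
          have := hρ.1; gcongr
        linarith
    · refine Eventually.of_forall fun v => ?_
      refine Tendsto.mul_const _ ?_
      have h2 : HasDerivAt (fun ρ : ℝ => x - ρ • v) (-v) 0 := by
        simpa using ((hasDerivAt_id (0:ℝ)).smul_const v).const_sub x
      have h3 : HasFDerivAt u L ((fun ρ : ℝ => x - ρ • v) 0) := by simpa using hfd
      have h4 := h3.comp_hasDerivAt (0:ℝ) h2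
      have h5 := h4.tendsto_slope_zero_right
      simpa [smul_eq_mul] using h5
  have e1 : ∫ v, - L v * k v = L e := by
    simp_rw [neg_mul]
    rw [integral_neg, m1, neg_neg]
  rw [e1] at key
  refine key.congr' ?_
  filter_upwards [self_mem_nhdsWithin] with ρ hρ
  exact (cv ρ hρ).symm
end dker

/-- the bracket kernel -/
def pk (N : ℕ) (s ρ : ℝ) (y : Euc N) : ℝ := (ρ + ‖y‖) ^ (-((N:ℝ) + 2 * s))

section mainest
variable {N : ℕ} {s : ℝ} {Ω : Set (Euc N)}

lemma pk_nonneg {ρ : ℝ} (hρ : 0 < ρ) (y : Euc N) : 0 ≤ pk N s ρ y := by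
  unfold pk; positivity

lemma pk_cont {ρ : ℝ} (hρ : 0 < ρ) : Continuous (pk N s ρ) := by
  unfold pk
  refine Continuous.rpow_const (by fun_prop) fun y => Or.inl ?_
  have := norm_nonneg y; linarith

lemma pk_le {ρ : ℝ} (hs : 0 < s) (hρ : 0 < ρ) (y : Euc N) : pk N s ρ y ≤ ρ ^ (-((N:ℝ) + 2 * s)) := by
  unfold pk
  exact Real.rpow_le_rpow_of_nonpos hρ (by linarith [norm_nonneg y]) (by
    have : (0:ℝ) ≤ N := Nat.cast_nonneg N
    linarith)

lemma pk_int {ρ : ℝ} (hs : 0 < s) (hρ : 0 < ρ) : Integrable (pk N s ρ) := by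
  obtain ⟨Ca, h, h2⟩ := bracket_int N (a := 2 * s) (by linarith)
  exact (h2 ρ hρ).1

/-- d^t times bracket kernel -/
lemma pk_mul {ρ t c D : ℝ} (hρ : 0 < ρ) (ht : 0 ≤ t) (hc : 0 ≤ c) (y : Euc N) (hD0 : 0 ≤ D)
    (hD : D ≤ c * (ρ + ‖y‖)) :
    D ^ t * pk N s ρ y ≤ c ^ t * (ρ + ‖y‖) ^ (-((N:ℝ) + (2 * s - t))) := by
  have hp : 0 < ρ + ‖y‖ := by positivity
  calc D ^ t * pk N s ρ y ≤ (c * (ρ + ‖y‖)) ^ t * pk N s ρ y := by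
        have := pk_nonneg (s := s) hρ y
        gcongr
    _ = _ := by
        rw [Real.mul_rpow hc hp.le, pk, mul_assoc, ← Real.rpow_add hp]
        congr 2; ring

/-- Where d > 6ρ the equation holds in mollified form -/
lemma loc_eq (hN0 : 0 < N) (hs : 0 < s) (hs1 : s < 1) (ho : IsOpen Ω) (hb : Bornology.IsBounded Ω)
    {u g : Euc N → ℝ} {Bu Cu : ℝ} (huc : Continuous u) (hui : Integrable u) (hBu : ∀ y, |u y| ≤ Bu)
    (hCu0 : 0 ≤ Cu) (hCu : ∀ y z, |u y - u z| ≤ Cu * ‖y - z‖ ^ s)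
    (hweak : ∀ φ, IsTestFn N Ω φ → Es N s u φ = ∫ z in Ω, g z * φ z)
    {K : Euc N → ℝ} (hK : ContDiff ℝ (⊤ : ℕ∞) K) {ρ : ℝ} (hρ : 0 < ρ) (hK0 : ∀ y, ρ < ‖y‖ → K y = 0)
    {z : Euc N} (hz : 6 * ρ < infDist z Ωᶜ) :
    ∫ y, u y * fracLap N s K (z - y) =
      ∫ y, {y | 5 * ρ < infDist y Ωᶜ}.indicator g y * K (z - y) := by
  have hd : ∀ y, infDist z Ωᶜ ≤ infDist y Ωᶜ + ‖z - y‖ := fun y => by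
    rw [← dist_eq_norm]; exact infDist_le_infDist_add_dist
  have hφ : ContDiff ℝ (⊤ : ℕ∞) fun y => K (z - y) := hK.comp (contDiff_const.sub contDiff_id)
  have hsupp : Function.support (fun y => K (z - y)) ⊆ closedBall z ρ := by
    intro y hy
    rw [mem_closedBall, dist_comm, dist_eq_norm]
    by_contra h
    exact hy (hK0 _ (not_le.1 h))
  have hc : HasCompactSupport fun y => K (z - y) :=
    HasCompactSupport.of_support_subset_isCompact (isCompact_closedBall z ρ) hsupp
  have hts : tsupport (fun y => K (z - y)) ⊆ Ω := by
    refine (closure_minimal hsupp isClosed_closedBall).trans fun y hy => ?_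
    rw [mem_closedBall, dist_comm, dist_eq_norm] at hy
    exact (d_pos hN0 ho hb y).1 (by linarith [hd y])
  have h1 := Es_eq hN0 hs hs1 huc hui hBu hCu0 hCu hφ hc
  rw [hweak _ ⟨hφ, hc, hts⟩] at h1
  simp_rw [fl_refl] at h1
  rw [← h1, ← integral_indicator ho.measurableSet]
  congr 1; funext y
  by_cases hy : K (z - y) = 0
  · simp [Set.indicator_apply, hy]
  · have h2 : ‖z - y‖ ≤ ρ := by
      by_contra h; exact hy (hK0 _ (not_le.1 h))
    have h3 : 5 * ρ < infDist y Ωᶜ := by linarith [hd y]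
    have h4 : y ∈ Ω := (d_pos hN0 ho hb y).1 (by linarith)
    rw [Set.indicator_of_mem h4, Set.indicator_of_mem (show y ∈ {y | 5 * ρ < infDist y Ωᶜ} from h3)]

/-- The pointwise estimate of the commutator. -/
lemma ptwise (hN0 : 0 < N) (hs : 0 < s) (hs1 : s < 1) (ho : IsOpen Ω) (hb : Bornology.IsBounded Ω)
    {u g : Euc N → ℝ} {Bu Cu : ℝ} (huc : Continuous u) (hui : Integrable u) (hBu : ∀ y, |u y| ≤ Bu)
    (hCu0 : 0 ≤ Cu) (hCu : ∀ y z, |u y - u z| ≤ Cu * ‖y - z‖ ^ s) (hu0 : ∀ y, y ∉ Ω → u y = 0)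
    (hweak : ∀ φ, IsTestFn N Ω φ → Es N s u φ = ∫ z in Ω, g z * φ z)
    {K : Euc N → ℝ} (hK : ContDiff ℝ (⊤ : ℕ∞) K) {ρ : ℝ} (hρ : 0 < ρ) (hK0 : ∀ y, ρ < ‖y‖ → K y = 0)
    {CQ : ℝ} (hCQ0 : 0 ≤ CQ) (hCQ : ∀ y, |fracLap N s K y| ≤ CQ * ρ⁻¹ * pk N s ρ y)
    {Bg Ik : ℝ} (hBg0 : 0 ≤ Bg) (hBg : ∀ y ∈ Ω, |g y| ≤ Bg) (hIk : ∫ y, |K y| = ρ⁻¹ * Ik)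
    {τ ε Ct : ℝ} (hτ : 0 < τ) (hε : ∀ z ∈ Ω, infDist z Ωᶜ < ε → |u z| ≤ τ * infDist z Ωᶜ ^ s)
    (hCt0 : 0 ≤ Ct) (hCt : ∀ y, |u y| ≤ τ * infDist y Ωᶜ ^ s + Ct * infDist y Ωᶜ ^ (3 * s / 2))
    (hρε : 3 * ρ < ε)
    {Ca Cb : ℝ}
    (hCa : Integrable (fun h : Euc N => (ρ+‖h‖)^(-((N:ℝ)+s))) ∧ ∫ h : Euc N, (ρ+‖h‖)^(-((N:ℝ)+s)) ≤ Ca*ρ^(-s))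
    (hCb : Integrable (fun h : Euc N => (ρ+‖h‖)^(-((N:ℝ)+s/2))) ∧ ∫ h : Euc N, (ρ+‖h‖)^(-((N:ℝ)+s/2)) ≤ Cb*ρ^(-(s/2)))
    (z : Euc N) :
    |(∫ y, {y | 3 * ρ < infDist y Ωᶜ}.indicator u y * fracLap N s K (z - y)) -
      ∫ y, {y | 5 * ρ < infDist y Ωᶜ}.indicator g y * K (z - y)| ≤
    CQ * ρ⁻¹ * (τ * (3 * ρ) ^ s) * (∫ y, {y | y ∈ Ω ∧ infDist y Ωᶜ ≤ 3 * ρ}.indicator 1 y * pk N s ρ (z - y))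
     + {z | infDist z Ωᶜ ≤ 6 * ρ}.indicator (fun _ =>
        CQ * ρ⁻¹ * (τ * 6 ^ s * (Ca * ρ ^ (-s)) + Ct * 6 ^ (3 * s / 2) * (Cb * ρ ^ (-(s/2)))) +
          Bg * (ρ⁻¹ * Ik)) z := by
  have hd0 : ∀ y, 0 ≤ infDist y Ωᶜ := fun y => infDist_nonneg
  have hdy : ∀ y, infDist y Ωᶜ ≤ infDist z Ωᶜ + ‖z - y‖ := fun y => by
    rw [← dist_eq_norm, dist_comm]; exact infDist_le_infDist_add_dist
  have pki : Integrable fun y => pk N s ρ (z - y) := (pk_int hs hρ).comp_sub_left z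
  have Qm : Measurable (fracLap N s K) := fl_meas hK.continuous
  have hρi : 0 ≤ ρ⁻¹ := by positivity
  have mA : MeasurableSet {y : Euc N | 3 * ρ < infDist y Ωᶜ} :=
    (isOpen_lt continuous_const (continuous_infDist_pt _)).measurableSet
  have mS : MeasurableSet {y : Euc N | y ∈ Ω ∧ infDist y Ωᶜ ≤ 3 * ρ} :=
    ho.measurableSet.inter (isClosed_le (continuous_infDist_pt _) continuous_const).measurableSet
  have Qi : Integrable fun y => fracLap N s K (z - y) := by
    refine (pki.const_mul (CQ * ρ⁻¹)).mono' (Qm.comp (measurable_const.sub measurable_id)).aestronglyMeasurable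
      (Eventually.of_forall fun y => hCQ _)
  have S0 : 0 ≤ ∫ y, {y | y ∈ Ω ∧ infDist y Ωᶜ ≤ 3 * ρ}.indicator (1 : Euc N → ℝ) y * pk N s ρ (z - y) := by
    refine integral_nonneg fun y => mul_nonneg (Set.indicator_nonneg (fun _ _ => zero_le_one) _) (pk_nonneg hρ _)
  by_cases hz : infDist z Ωᶜ ≤ 6 * ρ
  · rw [Set.indicator_of_mem (show z ∈ {z | infDist z Ωᶜ ≤ 6 * ρ} from hz)]
    have b1 : |∫ y, {y | 3 * ρ < infDist y Ωᶜ}.indicator u y * fracLap N s K (z - y)| ≤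
        CQ * ρ⁻¹ * (τ * 6 ^ s * (Ca * ρ ^ (-s)) + Ct * 6 ^ (3 * s / 2) * (Cb * ρ ^ (-(s/2)))) := by
      have i1 := hCa.1.comp_sub_left z
      have i2 := hCb.1.comp_sub_left z
      calc _ ≤ ∫ y, CQ * ρ⁻¹ * (τ * 6 ^ s * (ρ+‖z-y‖)^(-((N:ℝ)+s)) +
              Ct * 6 ^ (3 * s / 2) * (ρ+‖z-y‖)^(-((N:ℝ)+s/2))) := by
            rw [← Real.norm_eq_abs]
            refine norm_integral_le_of_norm_le (((i1.const_mul _).add (i2.const_mul _)).const_mul _)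
              (Eventually.of_forall fun y => ?_)
            have hDy : infDist y Ωᶜ ≤ 6 * (ρ + ‖z - y‖) := by
              have := hdy y; have := norm_nonneg (z - y); linarith
            have p1 := pk_mul (s := s) hρ hs.le (by norm_num : (0:ℝ) ≤ 6) (z - y) (hd0 y) hDy
            have p2 := pk_mul (s := s) hρ (t := 3 * s / 2) (by linarith) (by norm_num : (0:ℝ) ≤ 6) (z - y) (hd0 y) hDy
            rw [show 2 * s - s = s by ring] at p1
            rw [show 2 * s - 3 * s / 2 = s / 2 by ring] at p2
            rw [norm_mul, mul_comm]
            have q1 : ‖{y | 3 * ρ < infDist y Ωᶜ}.indicator u y‖ ≤ |u y| := norm_indicator_le_norm_self _ _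
            have q2 := q1.trans (hCt y)
            have hpk := pk_nonneg (s := s) hρ (z - y)
            calc ‖fracLap N s K (z - y)‖ * ‖{y | 3 * ρ < infDist y Ωᶜ}.indicator u y‖
                ≤ (CQ * ρ⁻¹ * pk N s ρ (z - y)) * (τ * infDist y Ωᶜ ^ s + Ct * infDist y Ωᶜ ^ (3 * s / 2)) := by
                  exact mul_le_mul (hCQ _) q2 (norm_nonneg _) (by positivity)
              _ = CQ * ρ⁻¹ * (τ * (infDist y Ωᶜ ^ s * pk N s ρ (z - y)) +
                  Ct * (infDist y Ωᶜ ^ (3 * s / 2) * pk N s ρ (z - y))) := by ring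
              _ ≤ CQ * ρ⁻¹ * (τ * (6 ^ s * (ρ+‖z-y‖)^(-((N:ℝ)+s))) +
                  Ct * (6 ^ (3 * s / 2) * (ρ+‖z-y‖)^(-((N:ℝ)+s/2)))) := by gcongr
              _ = _ := by ring
        _ = CQ * ρ⁻¹ * (τ * 6 ^ s * (∫ h : Euc N, (ρ+‖h‖)^(-((N:ℝ)+s))) +
              Ct * 6 ^ (3 * s / 2) * ∫ h : Euc N, (ρ+‖h‖)^(-((N:ℝ)+s/2))) := by
            rw [integral_const_mul, integral_add (i1.const_mul _) (i2.const_mul _), integral_const_mul,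
              integral_const_mul,
              integral_sub_left_eq_self (fun y : Euc N => (ρ+‖y‖)^(-((N:ℝ)+s))),
              integral_sub_left_eq_self (fun y : Euc N => (ρ+‖y‖)^(-((N:ℝ)+s/2)))]
        _ ≤ _ := by
            have := hCa.2; have := hCb.2
            gcongr
    have b2 : |∫ y, {y | 5 * ρ < infDist y Ωᶜ}.indicator g y * K (z - y)| ≤ Bg * (ρ⁻¹ * Ik) := by
      rw [← hIk]
      refine conv_bound hK.continuous (hcs_of_zero hK0) (fun y => ?_) z
      rw [Set.indicator_apply]
      split_ifs with h
      · exact hBg y ((d_pos hN0 ho hb y).1 (by have : 5 * ρ < infDist y Ωᶜ := h; linarith))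
      · simpa using hBg0
    have := abs_sub (∫ y, {y | 3 * ρ < infDist y Ωᶜ}.indicator u y * fracLap N s K (z - y))
      (∫ y, {y | 5 * ρ < infDist y Ωᶜ}.indicator g y * K (z - y))
    have h0 : 0 ≤ CQ * ρ⁻¹ * (τ * (3 * ρ) ^ s) * (∫ y, {y | y ∈ Ω ∧ infDist y Ωᶜ ≤ 3 * ρ}.indicator 1 y * pk N s ρ (z - y)) := by
      positivity
    linarith
  · rw [Set.indicator_of_notMem (show z ∉ {z | infDist z Ωᶜ ≤ 6 * ρ} from hz), add_zero]
    rw [← loc_eq hN0 hs hs1 ho hb huc hui hBu hCu0 hCu hweak hK hρ hK0 (not_le.1 hz)]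
    have uQ : Integrable fun y => u y * fracLap N s K (z - y) :=
      Qi.bdd_mul (c := Bu) huc.aestronglyMeasurable (Eventually.of_forall hBu)
    have uAQ : Integrable fun y => {y | 3 * ρ < infDist y Ωᶜ}.indicator u y * fracLap N s K (z - y) :=
      Qi.bdd_mul (c := Bu) (huc.measurable.indicator mA).aestronglyMeasurable
        (Eventually.of_forall fun y => (norm_indicator_le_norm_self _ _).trans (hBu y))
    rw [← integral_sub uAQ uQ, ← integral_const_mul, ← Real.norm_eq_abs]
    have i1 : Integrable fun y => {y | y ∈ Ω ∧ infDist y Ωᶜ ≤ 3 * ρ}.indicator (1 : Euc N → ℝ) y * pk N s ρ (z - y) := by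
      refine pki.bdd_mul (c := 1) ((measurable_one.indicator mS).aestronglyMeasurable)
        (Eventually.of_forall fun y => ?_)
      refine (norm_indicator_le_norm_self _ _).trans ?_
      simp
    refine norm_integral_le_of_norm_le (i1.const_mul _) (Eventually.of_forall fun y => ?_)
    have hpk := pk_nonneg (s := s) hρ (z - y)
    have nn : 0 ≤ CQ * ρ⁻¹ * (τ * (3 * ρ) ^ s) *
        ({y | y ∈ Ω ∧ infDist y Ωᶜ ≤ 3 * ρ}.indicator (1 : Euc N → ℝ) y * pk N s ρ (z - y)) := by
      have : 0 ≤ {y | y ∈ Ω ∧ infDist y Ωᶜ ≤ 3 * ρ}.indicator (1 : Euc N → ℝ) y :=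
        Set.indicator_nonneg (fun _ _ => zero_le_one) _
      positivity
    by_cases hy : 3 * ρ < infDist y Ωᶜ
    · rw [Set.indicator_of_mem (show y ∈ {y | 3 * ρ < infDist y Ωᶜ} from hy), sub_self, norm_zero]
      exact nn
    · rw [Set.indicator_of_notMem (show y ∉ {y | 3 * ρ < infDist y Ωᶜ} from hy), zero_mul, zero_sub, norm_neg]
      by_cases hyΩ : y ∈ Ω
      · push Not at hy
        rw [Set.indicator_of_mem (show y ∈ {y | y ∈ Ω ∧ infDist y Ωᶜ ≤ 3 * ρ} from ⟨hyΩ, hy⟩), norm_mul]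
        simp only [Pi.one_apply, one_mul]
        have e1 := hε y hyΩ (by linarith)
        have e2 : infDist y Ωᶜ ^ s ≤ (3 * ρ) ^ s := Real.rpow_le_rpow (hd0 y) hy hs.le
        calc ‖u y‖ * ‖fracLap N s K (z - y)‖ ≤ (τ * (3 * ρ) ^ s) * (CQ * ρ⁻¹ * pk N s ρ (z - y)) := by
              refine mul_le_mul ?_ (hCQ _) (norm_nonneg _) (by positivity)
              exact e1.trans (by gcongr)
          _ = _ := by ring
      · rw [hu0 y hyΩ, zero_mul, norm_zero]; exact nn

/-- Green function integrals. -/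
lemma green_strip (hN0 : 0 < N) (ho : IsOpen Ω) (hb : Bornology.IsBounded Ω) {x : Euc N}
    (hs : 0 < s) {Γ : Euc N → ℝ} (hΓi : Integrable Γ) (hΓz : ∀ z, z ∉ Ω → Γ z = 0) (hΓ0 : ∀ z, z ≠ x → 0 ≤ Γ z)
    {r C1 CV : ℝ} (hr : 0 < r) (hrx : 4 * r = infDist x Ωᶜ) (hC1 : 0 ≤ C1)
    (hΓ : ∀ z, r ≤ ‖z - x‖ → Γ z ≤ C1 * infDist z Ωᶜ ^ s)
    (htube : ∀ ρ > 0, volume.real {z | z ∈ Ω ∧ infDist z Ωᶜ ≤ ρ} ≤ CV * ρ) {ρ : ℝ} (hρ : 0 < ρ) (hρr : ρ ≤ 3 * r) :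
    ∫ z, Γ z * {z | infDist z Ωᶜ ≤ ρ}.indicator 1 z ≤ C1 * ρ ^ s * (CV * ρ) := by
  have mS : MeasurableSet {y : Euc N | y ∈ Ω ∧ infDist y Ωᶜ ≤ ρ} :=
    ho.measurableSet.inter (isClosed_le (continuous_infDist_pt _) continuous_const).measurableSet
  have fin : volume {y : Euc N | y ∈ Ω ∧ infDist y Ωᶜ ≤ ρ} ≠ ⊤ :=
    ((hb.subset (fun y hy => hy.1)).measure_lt_top).ne
  have m1 : MeasurableSet {z : Euc N | infDist z Ωᶜ ≤ ρ} :=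
    (isClosed_le (continuous_infDist_pt _) continuous_const).measurableSet
  have h1 : ∀ z, Γ z * {z | infDist z Ωᶜ ≤ ρ}.indicator (1 : Euc N → ℝ) z ≤
      {y : Euc N | y ∈ Ω ∧ infDist y Ωᶜ ≤ ρ}.indicator (fun _ => C1 * ρ ^ s) z := by
    intro z
    by_cases hz : z ∈ Ω
    · by_cases hd : infDist z Ωᶜ ≤ ρ
      · rw [Set.indicator_of_mem (show z ∈ {y : Euc N | y ∈ Ω ∧ infDist y Ωᶜ ≤ ρ} from ⟨hz, hd⟩),
          Set.indicator_of_mem (show z ∈ {y : Euc N | infDist y Ωᶜ ≤ ρ} from hd)]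
        simp only [Pi.one_apply, mul_one]
        have : infDist x Ωᶜ ≤ infDist z Ωᶜ + ‖z - x‖ := by
          rw [← dist_eq_norm, dist_comm]; exact infDist_le_infDist_add_dist
        refine (hΓ z (by linarith)).trans ?_
        have := Real.rpow_le_rpow infDist_nonneg hd hs.le
        gcongr
      · rw [Set.indicator_of_notMem (show z ∉ {y : Euc N | y ∈ Ω ∧ infDist y Ωᶜ ≤ ρ} from fun h => hd h.2),
          Set.indicator_of_notMem (show z ∉ {y : Euc N | infDist y Ωᶜ ≤ ρ} from hd)]
        simp
    · rw [hΓz z hz, Set.indicator_of_notMem (show z ∉ {y : Euc N | y ∈ Ω ∧ infDist y Ωᶜ ≤ ρ} from fun h => hz h.1)]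
      simp
  calc _ ≤ ∫ z, {y : Euc N | y ∈ Ω ∧ infDist y Ωᶜ ≤ ρ}.indicator (fun _ => C1 * ρ ^ s) z := by
        refine integral_mono ?_ ((integrable_indicator_iff mS).2 (integrableOn_const fin)) h1
        refine hΓi.mul_bdd (c := 1) (measurable_one.indicator m1).aestronglyMeasurable
          (Eventually.of_forall fun y => (norm_indicator_le_norm_self _ _).trans (by simp))
    _ = C1 * ρ ^ s * volume.real {y : Euc N | y ∈ Ω ∧ infDist y Ωᶜ ≤ ρ} := by
        rw [integral_indicator mS, setIntegral_const, smul_eq_mul, mul_comm]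
    _ ≤ _ := by
        have := htube ρ hρ
        gcongr

lemma green_S (hN0 : 0 < N) (ho : IsOpen Ω) (hb : Bornology.IsBounded Ω) {x : Euc N}
    (hs : 0 < s) {Γ : Euc N → ℝ} (hΓi : Integrable Γ) (hΓ0 : ∀ z, z ≠ x → 0 ≤ Γ z)
    {r C1 CV : ℝ} (hr : 0 < r) (hrx : 4 * r = infDist x Ωᶜ) (hC1 : 0 ≤ C1)
    (hΓ : ∀ z, r ≤ ‖z - x‖ → Γ z ≤ C1 * infDist z Ωᶜ ^ s)
    (htube : ∀ ρ > 0, volume.real {z | z ∈ Ω ∧ infDist z Ωᶜ ≤ ρ} ≤ CV * ρ) {ρ : ℝ} (hρ : 0 < ρ)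
    (hρ1 : ρ ≤ 1) (hρr : 3 * ρ ≤ 2 * r) {Ca : ℝ} (hCa0 : 0 ≤ Ca)
    (hCa : Integrable (fun h : Euc N => (ρ+‖h‖)^(-((N:ℝ)+s))) ∧ ∫ h : Euc N, (ρ+‖h‖)^(-((N:ℝ)+s)) ≤ Ca*ρ^(-s)) :
    Integrable (fun z => Γ z * ∫ y, {y | y ∈ Ω ∧ infDist y Ωᶜ ≤ 3 * ρ}.indicator 1 y * pk N s ρ (z - y)) ∧
    ∫ z, Γ z * (∫ y, {y | y ∈ Ω ∧ infDist y Ωᶜ ≤ 3 * ρ}.indicator 1 y * pk N s ρ (z - y)) ≤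
      (C1 * 3 ^ s * Ca + r ^ (-((N:ℝ) + 2 * s)) * ∫ z, Γ z) * ρ ^ (-s) * (CV * (3 * ρ)) := by
  have : Nonempty (Fin N) := ⟨⟨0, hN0⟩⟩
  set St : Set (Euc N) := {y | y ∈ Ω ∧ infDist y Ωᶜ ≤ 3 * ρ} with hSt
  have mS : MeasurableSet St :=
    ho.measurableSet.inter (isClosed_le (continuous_infDist_pt _) continuous_const).measurableSet
  have fin : volume St ≠ ⊤ := ((hb.subset (fun y hy => hy.1)).measure_lt_top).ne
  have indi : Integrable (St.indicator (1 : Euc N → ℝ)) :=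
    (integrable_indicator_iff mS).2 (integrableOn_const fin)
  have aeΓ : ∀ᵐ z : Euc N, z ≠ x := compl_mem_ae_iff.2 (measure_singleton x)
  have IΓ0 : 0 ≤ ∫ z, Γ z := integral_nonneg_of_ae (by
    filter_upwards [aeΓ] with z hz using hΓ0 z hz)
  have pki := pk_int (N := N) hs hρ
  have P : Integrable (fun p : Euc N × Euc N => (Γ p.1 * St.indicator (1 : Euc N → ℝ) p.2) * pk N s ρ (p.1 - p.2))
      (volume.prod volume) := by
    refine (hΓi.mul_prod indi).mul_bdd (c := ρ ^ (-((N:ℝ) + 2 * s))) ?_ ?_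
    · exact ((pk_cont hρ).comp (continuous_fst.sub continuous_snd)).aestronglyMeasurable
    · refine Eventually.of_forall fun p => ?_
      rw [Real.norm_of_nonneg (pk_nonneg hρ _)]
      exact pk_le hs hρ _
  have eq1 : ∀ z, Γ z * ∫ y, St.indicator 1 y * pk N s ρ (z - y) =
      ∫ y, (Γ z * St.indicator (1 : Euc N → ℝ) y) * pk N s ρ (z - y) := by
    intro z
    rw [← integral_const_mul]
    congr 1; funext y; ring
  refine ⟨?_, ?_⟩
  · simp_rw [eq1]
    exact P.integral_prod_left
  · simp_rw [eq1]
    rw [integral_integral_swap P]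
    set C2 := C1 * 3 ^ s * Ca + r ^ (-((N:ℝ) + 2 * s)) * ∫ z, Γ z with hC2
    have hC20 : 0 ≤ C2 := by positivity
    calc _ ≤ ∫ y, St.indicator (fun _ => C2 * ρ ^ (-s)) y := by
          refine integral_mono P.integral_prod_right
            ((integrable_indicator_iff mS).2 (integrableOn_const fin)) fun y => ?_
          simp only
          by_cases hy : y ∈ St
          · simp only [Set.indicator_of_mem hy, Pi.one_apply, mul_one]
            have i1 := hCa.1.comp_sub_right y
            have hyx : 2 * r ≤ ‖y - x‖ := by
              have : infDist x Ωᶜ ≤ infDist y Ωᶜ + ‖y - x‖ := by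
                rw [← dist_eq_norm, dist_comm]; exact infDist_le_infDist_add_dist
              have := hy.2
              linarith
            calc ∫ z, Γ z * pk N s ρ (z - y) ≤
                ∫ z, (C1 * 3 ^ s * (ρ+‖z-y‖)^(-((N:ℝ)+s)) + r ^ (-((N:ℝ) + 2 * s)) * Γ z) := by
                  refine integral_mono_ae ?_ ((i1.const_mul _).add (hΓi.const_mul _)) ?_
                  · refine hΓi.mul_bdd (c := ρ ^ (-((N:ℝ) + 2 * s)))
                      ((pk_cont hρ).comp (continuous_id.sub continuous_const)).aestronglyMeasurable
                      (Eventually.of_forall fun p => ?_)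
                    rw [Real.norm_of_nonneg (pk_nonneg hρ _)]
                    exact pk_le hs hρ _
                  · filter_upwards [aeΓ] with z hz
                    have hΓz := hΓ0 z hz
                    have hpk := pk_nonneg (s := s) hρ (z - y)
                    have hn : 0 < ρ + ‖z - y‖ := by positivity
                    by_cases hzr : r ≤ ‖z - x‖
                    · have hDz : infDist z Ωᶜ ≤ 3 * (ρ + ‖z - y‖) := by
                        have : infDist z Ωᶜ ≤ infDist y Ωᶜ + ‖z - y‖ := by
                          rw [← dist_eq_norm]; exact infDist_le_infDist_add_dist
                        have := hy.2
                        have := norm_nonneg (z - y)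
                        linarith
                      have p1 := pk_mul (s := s) hρ hs.le (by norm_num : (0:ℝ) ≤ 3) (z - y) infDist_nonneg hDz
                      rw [show 2 * s - s = s by ring] at p1
                      calc Γ z * pk N s ρ (z - y) ≤ C1 * infDist z Ωᶜ ^ s * pk N s ρ (z - y) := by
                            gcongr; exact hΓ z hzr
                        _ = C1 * (infDist z Ωᶜ ^ s * pk N s ρ (z - y)) := by ring
                        _ ≤ C1 * (3 ^ s * (ρ+‖z-y‖)^(-((N:ℝ)+s))) := by gcongr
                        _ ≤ _ := by
                          rw [← mul_assoc]
                          exact le_add_of_nonneg_right (by positivity)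
                    · push Not at hzr
                      have hzy : r ≤ ‖z - y‖ := by
                        have := norm_sub_le_norm_sub_add_norm_sub y z x
                        rw [norm_sub_rev y z] at this
                        linarith
                      have : pk N s ρ (z - y) ≤ r ^ (-((N:ℝ) + 2 * s)) := by
                        unfold pk
                        refine Real.rpow_le_rpow_of_nonpos hr (by linarith) ?_
                        have : (0:ℝ) ≤ N := Nat.cast_nonneg N
                        linarith
                      calc Γ z * pk N s ρ (z - y) ≤ Γ z * r ^ (-((N:ℝ) + 2 * s)) := by gcongr
                        _ = r ^ (-((N:ℝ) + 2 * s)) * Γ z := mul_comm _ _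
                        _ ≤ _ := le_add_of_nonneg_left (by positivity)
              _ = C1 * 3 ^ s * (∫ h : Euc N, (ρ+‖h‖)^(-((N:ℝ)+s))) + r ^ (-((N:ℝ) + 2 * s)) * ∫ z, Γ z := by
                  rw [integral_add (i1.const_mul _) (hΓi.const_mul _), integral_const_mul, integral_const_mul,
                    integral_sub_right_eq_self (fun y : Euc N => (ρ+‖y‖)^(-((N:ℝ)+s)))]
              _ ≤ C1 * 3 ^ s * (Ca*ρ^(-s)) + r ^ (-((N:ℝ) + 2 * s)) * (∫ z, Γ z) * ρ ^ (-s) := by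
                  have h1 : 1 ≤ ρ ^ (-s) := Real.one_le_rpow_of_pos_of_le_one_of_nonpos hρ hρ1 (by linarith)
                  have h2 := hCa.2
                  refine add_le_add (by gcongr) (le_mul_of_one_le_right (by positivity) h1)
              _ = _ := by rw [hC2]; ring
          · simp [Set.indicator_of_notMem hy]
      _ = C2 * ρ ^ (-s) * volume.real St := by
          rw [integral_indicator mS, setIntegral_const, smul_eq_mul, mul_comm]
      _ ≤ _ := by
          have := htube (3 * ρ) (by positivity)
          gcongr

end mainest

lemma main_bound {N : ℕ} {s : ℝ} {Ω : Set (Euc N)} (hN0 : 0 < N) (hs2 : 1 / 2 < s) (hs1 : s < 1)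
    (hN : 2 * s < N) (hΩ : IsC11 N Ω)
    {u g : Euc N → ℝ} {Bu Cu : ℝ} (huc : Continuous u) (hui : Integrable u) (hBu : ∀ y, |u y| ≤ Bu)
    (hCu0 : 0 ≤ Cu) (hCu : ∀ y z, |u y - u z| ≤ Cu * ‖y - z‖ ^ s) (hu0 : ∀ y, y ∉ Ω → u y = 0)
    (hweak : ∀ φ, IsTestFn N Ω φ → Es N s u φ = ∫ z in Ω, g z * φ z)
    (hgc : Continuous g) {Bg : ℝ} (hBg0 : 0 ≤ Bg) (hBg : ∀ y ∈ Ω, |g y| ≤ Bg)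
    (htr : ∀ τ > 0, ∃ ε > 0, ∀ z ∈ Ω, infDist z Ωᶜ < ε → |u z| ≤ τ * infDist z Ωᶜ ^ s)
    {x : Euc N} (hx : x ∈ Ω) (hud : DifferentiableAt ℝ u x)
    {Γ : Euc N → ℝ} {C : ℝ} (hG : IsGreenFn N s Ω C x Γ)
    (hΓd : ∀ z ∈ Ω, z ≠ x → DifferentiableAt ℝ Γ z)
    (hΓg : IntegrableOn (fun z => fderiv ℝ Γ z) Ω) {M : ℝ} (hM : ∫ z in Ω, ‖fderiv ℝ Γ z‖ ≤ M)
    {e : Euc N} (he : ‖e‖ ≤ 1) :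
    |fderiv ℝ u x e| ≤ M * Bg := by
  have : Nonempty (Fin N) := ⟨⟨0, hN0⟩⟩
  have hs : 0 < s := by linarith
  obtain ⟨CV, hCV0, htube⟩ := tube hN0 hΩ
  obtain ⟨ho, hb, -⟩ := hΩ
  obtain ⟨hΓi, hΓz, hΓt, hΓe⟩ := hG
  have hΓ0 : ∀ z, z ≠ x → 0 ≤ Γ z := fun z hz => (hΓe z hz).1
  have hdx : 0 < infDist x Ωᶜ := (d_pos hN0 ho hb x).2 hx
  obtain ⟨r, hrdef⟩ : ∃ r, r = infDist x Ωᶜ / 4 := ⟨_, rfl⟩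
  have hr : 0 < r := by rw [hrdef]; positivity
  have hrx : 4 * r = infDist x Ωᶜ := by rw [hrdef]; ring
  have hΓC : ∀ z, z ≠ x → Γ z ≤ |C| * ‖x - z‖ ^ (2 * s - (N:ℝ)) := by
    intro z hz
    refine (hΓe z hz).2.trans ?_
    have hb0 : 0 ≤ bdist N Ω x := infDist_nonneg
    have hb1 : 0 ≤ bdist N Ω z := infDist_nonneg
    exact mul_le_mul (le_abs_self C) (min_le_left _ _) (by positivity) (abs_nonneg _)
  obtain ⟨C1, hC1def⟩ : ∃ C1, C1 = |C| * (infDist x Ωᶜ ^ s * r ^ (-(N:ℝ))) := ⟨_, rfl⟩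
  have hC1 : 0 ≤ C1 := by rw [hC1def]; positivity
  have hΓ1 : ∀ z, r ≤ ‖z - x‖ → Γ z ≤ C1 * infDist z Ωᶜ ^ s := by
    intro z hz
    have hd0 : 0 ≤ infDist z Ωᶜ := infDist_nonneg
    by_cases hzΩ : z ∈ Ω
    · have hzx : z ≠ x := by rintro rfl; simp at hz; linarith
      refine (hΓe z hzx).2.trans ?_
      rw [bdist_eq hN0 ho hb hx, bdist_eq hN0 ho hb hzΩ]
      have h1 : ‖x - z‖ ^ (-(N:ℝ)) ≤ r ^ (-(N:ℝ)) := by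
        rw [norm_sub_rev]
        exact Real.rpow_le_rpow_of_nonpos hr hz (by simp)
      calc _ ≤ |C| * (infDist x Ωᶜ ^ s * infDist z Ωᶜ ^ s * ‖x - z‖ ^ (-(N:ℝ))) :=
            mul_le_mul (le_abs_self C) (min_le_right _ _) (by positivity) (abs_nonneg _)
        _ ≤ |C| * (infDist x Ωᶜ ^ s * infDist z Ωᶜ ^ s * r ^ (-(N:ℝ))) := by gcongr
        _ = _ := by rw [hC1def]; ring
    · rw [hΓz z hzΩ]; positivity
  have aeΓ : ∀ᵐ z : Euc N, z ≠ x := compl_mem_ae_iff.2 (measure_singleton x)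
  have IΓ0 : 0 ≤ ∫ z, Γ z := integral_nonneg_of_ae (by
    filter_upwards [aeΓ] with z hz using hΓ0 z hz)
  obtain ⟨κ, hκ, hκ0, hκnn, hκ1, hκc⟩ := kappa_exists hN0
  obtain ⟨k, hkdef⟩ : ∃ k : Euc N → ℝ, k = fun w => fderiv ℝ κ w e := ⟨_, rfl⟩
  have hk : ContDiff ℝ (⊤ : ℕ∞) k := by
    rw [hkdef]
    exact (hκ.fderiv_right (m := ((⊤ : ℕ∞) : WithTop ℕ∞)) (by norm_cast)).clm_apply contDiff_const
  have hk0 : ∀ y, 1 < ‖y‖ → k y = 0 := by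
    intro y hy
    have : κ =ᶠ[nhds y] fun _ => 0 := by
      have : {y : Euc N | 1 < ‖y‖} ∈ nhds y := (isOpen_lt continuous_const continuous_norm).mem_nhds hy
      filter_upwards [this] with z hz
      exact hκ0 z (le_of_lt hz)
    rw [hkdef]; simp only
    rw [this.fderiv_eq]; simp
  obtain ⟨CQ, hCQ0, hCQ⟩ := Q_bound hN0 hs hs1 hk hk0
  obtain ⟨Ca, hCa0, hCa⟩ := bracket_int N hs
  obtain ⟨Cb, hCb0, hCb⟩ := bracket_int N (a := s / 2) (by linarith)
  obtain ⟨Ik, hIk⟩ : ∃ Ik, Ik = ∫ y, |k y| := ⟨_, rfl⟩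
  have hBu0 : 0 ≤ Bu := (abs_nonneg _).trans (hBu 0)
  obtain ⟨C2, hC2⟩ : ∃ C2, C2 = C1 * 3 ^ s * Ca + r ^ (-((N:ℝ) + 2 * s)) * ∫ z, Γ z := ⟨_, rfl⟩
  have hC20 : 0 ≤ C2 := by rw [hC2]; positivity
  have lim0 := deriv_lim hκ hκ0 hκ1 hud huc e
  rw [← hkdef] at lim0
  -- bound with tau
  have main : ∀ τ : ℝ, 0 < τ → |fderiv ℝ u x e| ≤ M * Bg +
      (CQ * 3 ^ s * C2 * CV * 3 + 6 * 6 ^ s * C1 * CV * (CQ * 6 ^ s * Ca)) * τ := by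
    intro τ hτ
    obtain ⟨ε, hε, hεu⟩ := htr τ hτ
    obtain ⟨Ct, hCtdef⟩ : ∃ Ct, Ct = Bu * ε ^ (-(3 * s / 2)) := ⟨_, rfl⟩
    have hCt0 : 0 ≤ Ct := by rw [hCtdef]; positivity
    have hCt : ∀ y, |u y| ≤ τ * infDist y Ωᶜ ^ s + Ct * infDist y Ωᶜ ^ (3 * s / 2) := by
      intro y
      have hd0 : 0 ≤ infDist y Ωᶜ := infDist_nonneg
      by_cases hy : y ∈ Ω
      · rcases lt_or_ge (infDist y Ωᶜ) ε with h | h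
        · exact (hεu y hy h).trans (le_add_of_nonneg_right (by positivity))
        · refine (hBu y).trans (le_add_of_nonneg_of_le (by positivity) ?_)
          have h1 : ε ^ (3 * s / 2) ≤ infDist y Ωᶜ ^ (3 * s / 2) :=
            Real.rpow_le_rpow hε.le h (by linarith)
          calc Bu = Bu * ε ^ (-(3 * s / 2)) * ε ^ (3 * s / 2) := by
                rw [mul_assoc, ← Real.rpow_add hε]; simp
            _ ≤ Ct * infDist y Ωᶜ ^ (3 * s / 2) := by rw [← hCtdef]; gcongr
      · rw [hu0 y hy, abs_zero]; positivity
    have step : ∀ ρ : ℝ, 0 < ρ → ρ ≤ 1 → 3 * ρ < ε → 2 * ρ ≤ r →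
        |∫ y, u y * dker k ρ (x - y)| ≤ M * Bg + τ * (CQ * 3 ^ s * C2 * CV * 3) +
          6 * 6 ^ s * C1 * CV * (CQ * τ * 6 ^ s * Ca + CQ * Ct * 6 ^ (3 * s / 2) * Cb * ρ ^ (s / 2) +
            Bg * Ik * ρ ^ s) := by
      intro ρ hρ hρ1 hρε hρr
      set K := dker k ρ with hKdef
      have hK : ContDiff ℝ (⊤ : ℕ∞) K := ker_smooth hk ρ
      have hK0 : ∀ y, ρ < ‖y‖ → K y = 0 := fun y hy => ker_zero hk0 hρ y hy
      have hKc : HasCompactSupport K := hcs_of_zero hK0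
      have mA : MeasurableSet {y : Euc N | 3 * ρ < infDist y Ωᶜ} :=
        (isOpen_lt continuous_const (continuous_infDist_pt _)).measurableSet
      have mB : MeasurableSet {y : Euc N | 5 * ρ < infDist y Ωᶜ} :=
        (isOpen_lt continuous_const (continuous_infDist_pt _)).measurableSet
      have mD : MeasurableSet {y : Euc N | infDist y Ωᶜ ≤ 6 * ρ} :=
        (isClosed_le (continuous_infDist_pt _) continuous_const).measurableSet
      set w := {y : Euc N | 3 * ρ < infDist y Ωᶜ}.indicator u with hw
      have hwi : Integrable w := hui.indicator mA
      set gB := {y : Euc N | 5 * ρ < infDist y Ωᶜ}.indicator g with hgB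
      have hBΩ : ∀ y, 5 * ρ < infDist y Ωᶜ → y ∈ Ω := fun y hy =>
        (d_pos hN0 ho hb y).1 (by linarith)
      have hgBb : ∀ y, |gB y| ≤ Bg := by
        intro y
        rw [hgB, Set.indicator_apply]
        split_ifs with h
        · exact hBg y (hBΩ y h)
        · simpa using hBg0
      have hgBi : Integrable gB := by
        rw [hgB, integrable_indicator_iff mB]
        refine Measure.integrableOn_of_bounded (M := Bg) ?_ hgc.aestronglyMeasurable ?_
        · exact ((hb.subset (fun y hy => hBΩ y hy)).measure_lt_top).ne
        · filter_upwards [ae_restrict_mem mB] with y hy using hBg y (hBΩ y hy)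
      -- the test function
      have φs := conv_smooth hwi hK hKc
      have φt := conv_tsupp hN0 ho hb (w := w) (k := K) (ρ := ρ) (a := 3 * ρ) (by linarith)
        (fun y hy => Set.indicator_of_notMem (show y ∉ {y : Euc N | 3 * ρ < infDist y Ωᶜ} from not_lt.2 hy) _) hK0
      set φ : Euc N → ℝ := fun z => ∫ y, w y * K (z - y) with hφ
      have φx : ∫ y, u y * K (x - y) = φ x := by
        rw [hφ]; simp only
        congr 1; funext y
        by_cases hy : K (x - y) = 0
        · simp [hy]
        · have h2 : ‖x - y‖ ≤ ρ := by
            by_contra h; exact hy (hK0 _ (not_le.1 h))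
          have h3 : infDist x Ωᶜ ≤ infDist y Ωᶜ + ‖x - y‖ := by
            rw [← dist_eq_norm]; exact infDist_le_infDist_add_dist
          rw [hw, Set.indicator_of_mem (show y ∈ {y : Euc N | 3 * ρ < infDist y Ωᶜ} by
            change 3 * ρ < infDist y Ωᶜ
            linarith)]
      have grn := hΓt φ ⟨φs.1, φt.1, φt.2.1.trans φt.2.2⟩
      rw [setIntegral_eq_integral_of_forall_compl_eq_zero (fun z hz => by rw [hΓz z hz, zero_mul])] at grn
      have Fm : Measurable (fracLap N s φ) := fl_meas φs.1.continuous
      have Feq : ∀ z, fracLap N s φ z = ∫ y, w y * fracLap N s K (z - y) := fun z =>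
        fl_conv hN0 hs hs1 hK hKc hwi z
      -- the mollified right side
      have hκ0' : ∀ y, 1 < ‖y‖ → κ y = 0 := fun y hy => hκ0 y hy.le
      have kz : ∀ y, ρ < ‖y‖ → kap κ ρ y = 0 := fun y hy => kap_zero hκ0' hρ y hy
      have kcs : HasCompactSupport (kap κ ρ) := hcs_of_zero kz
      have Hs := conv_smooth hgBi (kap_smooth hκ ρ) kcs
      have Ht := conv_tsupp hN0 ho hb (w := gB) (k := kap κ ρ) (ρ := ρ) (a := 5 * ρ) (by linarith)
        (fun y hy => Set.indicator_of_notMem (show y ∉ {y : Euc N | 5 * ρ < infDist y Ωᶜ} from not_lt.2 hy) _) kz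
      have Hb : ∀ z, |∫ y, gB y * kap κ ρ (z - y)| ≤ Bg := by
        intro z
        refine (conv_bound (kap_smooth hκ ρ).continuous kcs hgBb z).trans (le_of_eq ?_)
        have : ∀ y, |kap κ ρ y| = kap κ ρ y := fun y => abs_of_nonneg (by
          unfold kap
          have := hκnn (ρ⁻¹ • y)
          positivity)
        simp_rw [this]
        rw [kap_int κ hρ, hκ1, mul_one]
      set H : Euc N → ℝ := fun z => ∫ y, gB y * kap κ ρ (z - y) with hH
      have H1 : ContDiff ℝ 1 H := Hs.1.of_le (by norm_cast)
      have ib := ibp_bound hN0 hs2 hN hΓi (abs_nonneg C) hΓ0 hΓC hΓd hΓg hM H1 Ht.1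
        (Ht.2.1.trans Ht.2.2) Hb he
      have H' : ∀ z, fderiv ℝ H z e = ∫ y, gB y * K (z - y) := by
        intro z
        rw [Hs.2 z e]
        simp_rw [kap_fderiv hκ]
        rw [hKdef, hkdef]
      have H'c : Continuous fun z => fderiv ℝ H z e :=
        (H1.continuous_fderiv one_ne_zero).clm_apply continuous_const
      have hIkρ : ∫ y, |K y| = ρ⁻¹ * Ik := by rw [hIk]; exact ker_abs_int k hρ
      have i2 : Integrable fun z => Γ z * fderiv ℝ H z e := by
        refine hΓi.mul_bdd (c := Bg * (ρ⁻¹ * Ik)) H'c.aestronglyMeasurable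
          (Eventually.of_forall fun z => ?_)
        rw [H' z, ← hIkρ]
        exact conv_bound hK.continuous hKc hgBb z
      have pw := fun z => ptwise hN0 hs hs1 ho hb huc hui hBu hCu0 hCu hu0 hweak hK hρ hK0 hCQ0
        (hCQ ρ hρ) hBg0 hBg hIkρ hτ hεu hCt0 hCt hρε (hCa ρ hρ) (hCb ρ hρ) z
      have gS := green_S hN0 ho hb hs hΓi hΓ0 hr hrx hC1 hΓ1 htube hρ hρ1 (by linarith) hCa0.le (hCa ρ hρ)
      have gT := green_strip hN0 ho hb hs hΓi hΓz hΓ0 hr hrx hC1 hΓ1 htube (ρ := 6 * ρ) (by linarith)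
        (by linarith)
      rw [← hC2] at gS
      set S : Euc N → ℝ := fun z => ∫ y, {y | y ∈ Ω ∧ infDist y Ωᶜ ≤ 3 * ρ}.indicator 1 y * pk N s ρ (z - y) with hS
      obtain ⟨D, hD⟩ : ∃ D, D = CQ * ρ⁻¹ * (τ * 6 ^ s * (Ca * ρ ^ (-s)) + Ct * 6 ^ (3 * s / 2) * (Cb * ρ ^ (-(s/2)))) +
          Bg * (ρ⁻¹ * Ik) := ⟨_, rfl⟩
      rw [← hD] at pw
      have hIk0 : 0 ≤ Ik := by rw [hIk]; exact integral_nonneg fun y => abs_nonneg _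
      have hD0 : 0 ≤ D := by rw [hD]; positivity
      have iT : Integrable fun z => Γ z * {z | infDist z Ωᶜ ≤ 6 * ρ}.indicator (1 : Euc N → ℝ) z := by
        refine hΓi.mul_bdd (c := 1) (measurable_one.indicator mD).aestronglyMeasurable
          (Eventually.of_forall fun y => (norm_indicator_le_norm_self _ _).trans (by simp))
      have dom : ∀ᵐ z, ‖Γ z * (fracLap N s φ z - fderiv ℝ H z e)‖ ≤
          CQ * ρ⁻¹ * (τ * (3 * ρ) ^ s) * (Γ z * S z) +
            D * (Γ z * {z | infDist z Ωᶜ ≤ 6 * ρ}.indicator (1 : Euc N → ℝ) z) := by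
        filter_upwards [aeΓ] with z hz
        have h1 := pw z
        rw [← Feq, ← H'] at h1
        have h2 := hΓ0 z hz
        rw [norm_mul, Real.norm_of_nonneg h2, Real.norm_eq_abs]
        refine (mul_le_mul_of_nonneg_left h1 h2).trans (le_of_eq ?_)
        by_cases h : infDist z Ωᶜ ≤ 6 * ρ
        · simp only [Set.indicator_of_mem (show z ∈ {z | infDist z Ωᶜ ≤ 6 * ρ} from h), Pi.one_apply]
          ring
        · simp only [Set.indicator_of_notMem (show z ∉ {z | infDist z Ωᶜ ≤ 6 * ρ} from h)]
          ring
      have idom := (gS.1.const_mul (CQ * ρ⁻¹ * (τ * (3 * ρ) ^ s))).add (iT.const_mul D)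
      have i3 : Integrable fun z => Γ z * (fracLap N s φ z - fderiv ℝ H z e) :=
        idom.mono' (hΓi.aestronglyMeasurable.mul
          (Fm.sub H'c.measurable).aestronglyMeasurable) dom
      have b3 : |∫ z, Γ z * (fracLap N s φ z - fderiv ℝ H z e)| ≤
          CQ * ρ⁻¹ * (τ * (3 * ρ) ^ s) * (C2 * ρ ^ (-s) * (CV * (3 * ρ))) +
            D * (C1 * (6 * ρ) ^ s * (CV * (6 * ρ))) := by
        refine (norm_integral_le_of_norm_le idom dom).trans ?_
        have e1 := integral_add (gS.1.const_mul (CQ * ρ⁻¹ * (τ * (3 * ρ) ^ s))) (iT.const_mul D)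
        rw [integral_const_mul, integral_const_mul] at e1
        refine (le_of_eq e1).trans ?_
        have := gS.2
        gcongr
      have split : φ x = (∫ z, Γ z * fderiv ℝ H z e) +
          ∫ z, Γ z * (fracLap N s φ z - fderiv ℝ H z e) := by
        rw [← grn, ← integral_add i2 i3]
        congr 1; funext z; ring
      rw [φx, split]
      refine (abs_add_le _ _).trans ?_
      have alg : CQ * ρ⁻¹ * (τ * (3 * ρ) ^ s) * (C2 * ρ ^ (-s) * (CV * (3 * ρ))) +
            D * (C1 * (6 * ρ) ^ s * (CV * (6 * ρ))) = τ * (CQ * 3 ^ s * C2 * CV * 3) +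
          6 * 6 ^ s * C1 * CV * (CQ * τ * 6 ^ s * Ca + CQ * Ct * 6 ^ (3 * s / 2) * Cb * ρ ^ (s / 2) +
            Bg * Ik * ρ ^ s) := by
        have hp : 0 < ρ ^ (s / 2) := Real.rpow_pos_of_pos hρ _
        have hps : ρ ^ s = ρ ^ (s / 2) * ρ ^ (s / 2) := by
          rw [← Real.rpow_add hρ]; congr 1; ring
        rw [hD, Real.mul_rpow (by norm_num) hρ.le, Real.mul_rpow (by norm_num) hρ.le,
          Real.rpow_neg hρ.le, Real.rpow_neg hρ.le, hps]
        generalize ρ ^ (s / 2) = p at hp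
        field_simp
      linarith
    -- limit
    have lim2 : Tendsto (fun ρ : ℝ => M * Bg + τ * (CQ * 3 ^ s * C2 * CV * 3) +
          6 * 6 ^ s * C1 * CV * (CQ * τ * 6 ^ s * Ca + CQ * Ct * 6 ^ (3 * s / 2) * Cb * ρ ^ (s / 2) +
            Bg * Ik * ρ ^ s)) (nhdsWithin 0 (Set.Ioi 0)) (nhds (M * Bg + τ * (CQ * 3 ^ s * C2 * CV * 3) +
          6 * 6 ^ s * C1 * CV * (CQ * τ * 6 ^ s * Ca + CQ * Ct * 6 ^ (3 * s / 2) * Cb * 0 +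
            Bg * Ik * 0))) := by
      have hpw : ∀ a : ℝ, 0 < a → Tendsto (fun r : ℝ => r ^ a) (nhdsWithin 0 (Set.Ioi 0)) (nhds 0) := by
        intro a ha
        have := (Real.continuousAt_rpow_const 0 a (Or.inr ha.le)).tendsto
        rw [Real.zero_rpow ha.ne'] at this
        exact this.mono_left nhdsWithin_le_nhds
      exact (((((hpw (s / 2) (by linarith)).const_mul _).const_add _).add
        ((hpw s hs).const_mul _)).const_mul _).const_add _
    have lim3 := le_of_tendsto_of_tendsto lim0.abs lim2 (by
      have hm : 0 < min 1 (min (ε / 3) (r / 2)) := by positivity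
      filter_upwards [Ioo_mem_nhdsGT hm] with ρ hρ
      have h1 := hρ.2
      rw [lt_min_iff, lt_min_iff] at h1
      exact step ρ hρ.1 h1.1.le (by linarith [h1.2.1]) (by linarith [h1.2.2]))
    refine lim3.trans (le_of_eq ?_)
    ring
  -- tau to 0
  obtain ⟨c, hc⟩ : ∃ c, c = CQ * 3 ^ s * C2 * CV * 3 + 6 * 6 ^ s * C1 * CV * (CQ * 6 ^ s * Ca) := ⟨_, rfl⟩
  rw [← hc] at main
  have hc0 : 0 ≤ c := by rw [hc]; positivity
  refine le_of_forall_pos_le_add fun η hη => ?_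
  refine (main (η / (c + 1)) (by positivity)).trans ?_
  gcongr
  rw [mul_div_assoc', div_le_iff₀ (by positivity)]
  nlinarith

/-- global Lipschitz bound for solutions of the overdetermined problem,
case `2s > 1`. -/
theorem statement2
    (s : ℝ) (hs : 1 / 2 < s) (hs1 : s < 1)
    (N : ℕ) (hN : 2 * s < N)
    (Ω : Set (Euc N)) (hΩ : IsC11 N Ω)
    (β : ℝ) (hβ0 : 0 < β) (hβ1 : β < 1)
    (f : Euc N → ℝ → ℝ) (hf : LocHolder β (fun p : Euc N × ℝ => f p.1 p.2))
    (u : Euc N → ℝ) (hu : IsWeakSolution N s Ω f u)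
    (hudiff : ∀ x ∈ Ω, DifferentiableAt ℝ u x)
    (G : Euc N → Euc N → ℝ) (C : ℝ)
    (hG : ∀ x ∈ Ω, IsGreenFn N s Ω C x (G x))
    (hGdiff : ∀ x ∈ Ω, ∀ z ∈ Ω, z ≠ x → DifferentiableAt ℝ (G x) z)
    (hGgradInt : ∀ x ∈ Ω, IntegrableOn (fun z => fderiv ℝ (G x) z) Ω)
    (hGgradBdd : ∃ M : ℝ, ∀ x ∈ Ω, (∫ z in Ω, ‖fderiv ℝ (G x) z‖) ≤ M)
    (gu : Euc N → ℝ) (hgu : HasFracTrace N s Ω u gu)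
    (gG : Euc N → Euc N → ℝ) (hgG : ∀ x ∈ Ω, HasFracTrace N s Ω (G x) (gG x))
    (hgu0 : ∀ θ ∈ frontier Ω, gu θ = 0) :
    ∃ M : ℝ, ∀ x ∈ Ω, ‖fderiv ℝ u x‖ ≤ M := by
  have hs0 : 0 < s := by linarith
  have hN0 : 0 < N := by
    have : (0:ℝ) < N := by linarith
    exact_mod_cast this
  obtain ⟨⟨Ch, hCh⟩, hu0, hweak⟩ := hu
  have hsn : ((s.toNNReal : NNReal) : ℝ) = s := Real.coe_toNNReal s hs0.le
  have huc : Continuous u := hCh.continuous (Real.toNNReal_pos.2 hs0)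
  have ho := hΩ.1
  have hb := hΩ.2.1
  have hcl : IsCompact (closure Ω) := hb.isCompact_closure
  have hucs : HasCompactSupport u := by
    refine HasCompactSupport.of_support_subset_isCompact hcl fun y hy => ?_
    by_contra h
    exact hy (hu0 y fun h' => h (subset_closure h'))
  obtain ⟨Bu, hBu⟩ := hucs.exists_bound_of_continuous huc
  have hui : Integrable u := huc.integrable_of_hasCompactSupport hucs
  have hCu : ∀ y z, |u y - u z| ≤ (Ch : ℝ) * ‖y - z‖ ^ s := by
    intro y z
    have := hCh.dist_le y z
    rwa [hsn, Real.dist_eq, dist_eq_norm] at this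
  have hfc : Continuous (fun p : Euc N × ℝ => f p.1 p.2) := by
    rw [continuous_iff_continuousAt]
    intro p
    obtain ⟨t, ht, Cp, hCp⟩ := hf p
    exact (hCp.continuousOn (Real.toNNReal_pos.2 hβ0)).continuousAt ht
  have hgc : Continuous (fun z => f z (u z)) := hfc.comp (continuous_id.prodMk huc)
  obtain ⟨Bg, hBg⟩ := hcl.exists_bound_of_continuousOn hgc.continuousOn
  obtain ⟨M, hM⟩ := hGgradBdd
  refine ⟨M * |Bg|, fun x hx => ?_⟩
  have hM0 : 0 ≤ M := (integral_nonneg fun z => norm_nonneg _).trans (hM x hx)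
  refine ContinuousLinearMap.opNorm_le_of_unit_norm (by positivity) fun e he => ?_
  exact main_bound hN0 hs hs1 hN hΩ huc hui hBu Ch.2 hCu hu0 hweak hgc (abs_nonneg Bg)
    (fun y hy => (hBg y (subset_closure hy)).trans (le_abs_self _))
    (fun τ hτ => unif_trace hN0 ho hb hgu hgu0 hτ) hx (hudiff x hx) (hG x hx) (hGdiff x hx)
    (hGgradInt x hx) (hM x hx) he.le
end
end

section
/- Let s ∈ (0,1), let N ≥ 2 be an integer, and let Ω ⊂ ℝ^N be a bounded open set of class C^{1,1} with 0 ∈ Ω, symmetric with respect to the hyperplane H_j = {x ∈ ℝ^N : x_j = 0} for some j ∈ {1,…,N} (i.e. T_j(Ω) = Ω where T_j(x) = x − 2 x_j e_j). Suppose H : Ω × ℝ^N → ℝ is such that for every x ∈ Ω the function z ↦ H(x,z) is continuous and bounded on ℝ^N, equals b_{N,s}|x−z|^{2s−N} for all z ∈ ℝ^N∖Ω, and is pointwise s-harmonic in Ω: for every z ∈ Ω the integral (c_{N,s}/2) ∫_{ℝ^N} (2H(x,z) − H(x,z+h) − H(x,z−h))/|h|^{N+2s} dh converges absolutely and equals 0.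 Define the fractional Robin function R_s(x) := H(x,x) and assume R_s is differentiable at 0. Then ∂_j R_s(0) = 0. -/
open MeasureTheory Real Filter Metric

noncomputable section

/-- The reflection `T_j(x) = x - 2 x_j e_j` across the hyperplane `{x_j = 0}`. -/
def reflectHyp (N : ℕ) (j : Fin N) (x : Euc N) : Euc N :=
  x - (2 * x j) • EuclideanSpace.single j 1

/-- Maximum principle for the symmetrized singular integral. -/
theorem maxPrinciple_aux (N : ℕ) (j : Fin N) (a : ℝ) (Ω : Set (Euc N))
    (hb : Bornology.IsBounded Ω) (w : Euc N → ℝ) (hc : Continuous w)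
    (hout : ∀ z, z ∉ Ω → w z = 0)
    (hint : ∀ z ∈ Ω, Integrable (fun h : Euc N =>
        (2 * w z - w (z + h) - w (z - h)) / ‖h‖ ^ a))
    (hzero : ∀ z ∈ Ω, (∫ h : Euc N, (2 * w z - w (z + h) - w (z - h)) / ‖h‖ ^ a) = 0)
    (z : Euc N) : w z ≤ 0 := by
  by_contra hz
  push Not at hz
  have hzΩ : z ∈ Ω := by
    by_contra h
    rw [hout z h] at hz
    exact lt_irrefl _ hz
  obtain ⟨m, hm, hmax⟩ := hb.isCompact_closure.exists_isMaxOn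
    ⟨z, subset_closure hzΩ⟩ hc.continuousOn
  have hmpos : 0 < w m := lt_of_lt_of_le hz (hmax (subset_closure hzΩ))
  have hmΩ : m ∈ Ω := by
    by_contra h
    rw [hout m h] at hmpos
    exact lt_irrefl _ hmpos
  have hle : ∀ y, w y ≤ w m := by
    intro y
    by_cases hy : y ∈ Ω
    · exact hmax (subset_closure hy)
    · rw [hout y hy]; exact hmpos.le
  have hnn : ∀ h : Euc N, 0 ≤ (2 * w m - w (m + h) - w (m - h)) / ‖h‖ ^ a := by
    intro h
    apply div_nonneg
    · linarith [hle (m + h), hle (m - h)]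
    · positivity
  have hae := (integral_eq_zero_iff_of_nonneg hnn (hint m hmΩ)).1 (hzero m hmΩ)
  obtain ⟨R, hR⟩ := hb.exists_norm_le
  have hopen : IsOpen {h : Euc N | |R| + ‖m‖ < ‖h‖} :=
    isOpen_lt continuous_const continuous_norm
  have hne : {h : Euc N | |R| + ‖m‖ < ‖h‖}.Nonempty := by
    refine ⟨(|R| + ‖m‖ + 1) • EuclideanSpace.single j 1, ?_⟩
    have hp : 0 ≤ |R| + ‖m‖ + 1 := by positivity
    simp only [Set.mem_setOf_eq, norm_smul, Real.norm_eq_abs, abs_of_nonneg hp,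
      EuclideanSpace.norm_single, norm_one, mul_one]
    simp
  have hd := (MeasureTheory.Measure.dense_of_ae hae)
  obtain ⟨h, hh1, hh2⟩ := hd.inter_open_nonempty _ hopen hne
  simp only [Set.mem_setOf_eq, Pi.zero_apply] at hh1 hh2
  have h1 : m + h ∉ Ω := by
    intro hc
    have e1 := hR _ hc
    have e2 := norm_sub_le (m + h) m
    rw [add_sub_cancel_left] at e2
    linarith [le_abs_self R]
  have h2 : m - h ∉ Ω := by
    intro hc
    have e1 := hR _ hc
    have e2 := norm_sub_le m (m - h)
    rw [sub_sub_cancel] at e2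
    linarith [le_abs_self R]
  rw [hout _ h1, hout _ h2] at hh2
  have hhpos : 0 < ‖h‖ := lt_of_le_of_lt (by positivity) hh1
  have : 0 < (2 * w m - 0 - 0) / ‖h‖ ^ a := by
    apply div_pos
    · linarith
    · exact Real.rpow_pos_of_pos hhpos _
  linarith

theorem reflectHyp_eq (N : ℕ) (j : Fin N) :
    ∃ T : Euc N ≃ₗᵢ[ℝ] Euc N, ∀ x, T x = reflectHyp N j x := by
  refine ⟨(Submodule.span ℝ {(EuclideanSpace.single j 1 : Euc N)})ᗮ.reflection, fun x => ?_⟩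
  rw [Submodule.reflection_orthogonal_apply, Submodule.reflection_singleton_apply]
  simp [reflectHyp, EuclideanSpace.inner_single_left, two_smul, two_mul, add_smul]

/-- criticality of the fractional Robin function at the center of a
symmetric domain. -/
theorem statement5
    (s : ℝ) (hs0 : 0 < s) (hs1 : s < 1)
    (N : ℕ) (hN : 2 ≤ N)
    (Ω : Set (Euc N)) (hΩ : IsC11 N Ω) (h0 : (0 : Euc N) ∈ Ω)
    (j : Fin N) (hsym : reflectHyp N j '' Ω = Ω)
    (H : Euc N → Euc N → ℝ)
    (hHcont : ∀ x ∈ Ω, Continuous (H x))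
    (hHbdd : ∀ x ∈ Ω, ∃ M : ℝ, ∀ z, |H x z| ≤ M)
    (hHout : ∀ x ∈ Ω, ∀ z, z ∉ Ω → H x z = bNs N s * ‖x - z‖ ^ (2 * s - (N : ℝ)))
    (hHharm : ∀ x ∈ Ω, ∀ z ∈ Ω,
      Integrable (fun h : Euc N =>
        (2 * H x z - H x (z + h) - H x (z - h)) / ‖h‖ ^ ((N : ℝ) + 2 * s)) ∧
      (cNs N s / 2) *
        (∫ h : Euc N,
          (2 * H x z - H x (z + h) - H x (z - h)) / ‖h‖ ^ ((N : ℝ) + 2 * s)) = 0)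
    (hRdiff : DifferentiableAt ℝ (fun x => H x x) 0) :
    fderiv ℝ (fun x => H x x) 0 (EuclideanSpace.single j 1) = 0 := by
  obtain ⟨T, hT⟩ := reflectHyp_eq N j
  have hsymT : ∀ x ∈ Ω, T x ∈ Ω := by
    intro x hx
    rw [hT, ← hsym]
    exact ⟨x, hx, rfl⟩
  have hTT : ∀ x, T (T x) = x := by
    intro x
    rw [hT, hT]
    ext i
    by_cases hi : i = j
    · subst hi
      simp [reflectHyp]
      ring
    · simp [reflectHyp, hi]
  have hTout : ∀ z, z ∉ Ω → T z ∉ Ω := by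
    intro z hz h
    exact hz (hTT z ▸ hsymT _ h)
  have hcpos : cNs N s / 2 ≠ 0 := by
    have g1 : 0 < Real.Gamma (((N : ℝ) + 2 * s) / 2) := Real.Gamma_pos_of_pos (by positivity)
    have g2 : 0 < Real.Gamma (1 - s) := Real.Gamma_pos_of_pos (by linarith)
    unfold cNs
    positivity
  have key : ∀ x ∈ Ω, ∀ z, H (T x) (T z) = H x z := by
    intro x hx z
    have hTx := hsymT x hx
    have hmp : MeasurePreserving T (volume : Measure (Euc N)) volume := T.measurePreserving
    have hI1 : ∀ z ∈ Ω, Integrable (fun h : Euc N =>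
        (2 * H x z - H x (z + h) - H x (z - h)) / ‖h‖ ^ ((N : ℝ) + 2 * s)) ∧
        (∫ h : Euc N,
          (2 * H x z - H x (z + h) - H x (z - h)) / ‖h‖ ^ ((N : ℝ) + 2 * s)) = 0 := by
      intro z hz
      exact ⟨(hHharm x hx z hz).1, (mul_eq_zero.1 (hHharm x hx z hz).2).resolve_left hcpos⟩
    have hI2 : ∀ z ∈ Ω, Integrable (fun h : Euc N =>
        (2 * H (T x) (T z) - H (T x) (T (z + h)) - H (T x) (T (z - h)))
          / ‖h‖ ^ ((N : ℝ) + 2 * s)) ∧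
        (∫ h : Euc N,
          (2 * H (T x) (T z) - H (T x) (T (z + h)) - H (T x) (T (z - h)))
            / ‖h‖ ^ ((N : ℝ) + 2 * s)) = 0 := by
      intro z hz
      obtain ⟨e1, e2⟩ := hHharm (T x) hTx (T z) (hsymT z hz)
      have e3 := (mul_eq_zero.1 e2).resolve_left hcpos
      have hfe : (fun h : Euc N =>
        (2 * H (T x) (T z) - H (T x) (T (z + h)) - H (T x) (T (z - h)))
          / ‖h‖ ^ ((N : ℝ) + 2 * s)) = (fun h : Euc N =>
        (2 * H (T x) (T z) - H (T x) (T z + h) - H (T x) (T z - h))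
          / ‖h‖ ^ ((N : ℝ) + 2 * s)) ∘ T := by
        funext h
        simp
      rw [hfe]
      constructor
      · exact (hmp.integrable_comp_emb T.toHomeomorph.measurableEmbedding).2 e1
      · rw [← e3]
        exact hmp.integral_comp T.toHomeomorph.measurableEmbedding (fun h : Euc N =>
          (2 * H (T x) (T z) - H (T x) (T z + h) - H (T x) (T z - h))
            / ‖h‖ ^ ((N : ℝ) + 2 * s))
    have hc1 : Continuous (fun z => H (T x) (T z)) := (hHcont _ hTx).comp T.continuous
    have hc2 : Continuous (H x) := hHcont x hx
    have ho : ∀ z, z ∉ Ω → H (T x) (T z) = H x z := by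
      intro z hz
      rw [hHout _ hTx _ (hTout z hz), hHout x hx z hz, ← map_sub, T.norm_map]
    apply le_antisymm
    · have := maxPrinciple_aux N j ((N : ℝ) + 2 * s) Ω hΩ.2.1
        (fun z => H (T x) (T z) - H x z) (hc1.sub hc2)
        (fun z hz => by simp [ho z hz])
        (fun z hz => by
          refine ((hI2 z hz).1.sub (hI1 z hz).1).congr (Filter.Eventually.of_forall fun h => ?_)
          simp only [Pi.sub_apply]
          ring)
        (fun z hz => by
          have := integral_sub (hI2 z hz).1 (hI1 z hz).1
          rw [(hI2 z hz).2, (hI1 z hz).2, sub_zero] at this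
          rw [← this]
          congr 1
          funext h
          ring) z
      simpa using this
    · have := maxPrinciple_aux N j ((N : ℝ) + 2 * s) Ω hΩ.2.1
        (fun z => H x z - H (T x) (T z)) (hc2.sub hc1)
        (fun z hz => by simp [ho z hz])
        (fun z hz => by
          refine ((hI1 z hz).1.sub (hI2 z hz).1).congr (Filter.Eventually.of_forall fun h => ?_)
          simp only [Pi.sub_apply]
          ring)
        (fun z hz => by
          have := integral_sub (hI1 z hz).1 (hI2 z hz).1
          rw [(hI2 z hz).2, (hI1 z hz).2, sub_zero] at this
          rw [← this]
          congr 1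
          funext h
          ring) z
      simpa using this
  have hev : (fun x => H (T x) (T x)) =ᶠ[nhds 0] (fun x => H x x) := by
    filter_upwards [hΩ.1.mem_nhds h0] with x hx using key x hx x
  have hTd : HasFDerivAt (fun x : Euc N => T x)
      (T.toContinuousLinearEquiv : Euc N →L[ℝ] Euc N) 0 :=
    T.toContinuousLinearEquiv.hasFDerivAt
  have hd0 : HasFDerivAt (fun x : Euc N => H x x) (fderiv ℝ (fun x : Euc N => H x x) 0) (T 0) := by
    rw [map_zero]
    exact hRdiff.hasFDerivAt
  have hd1 := (hd0.comp (0 : Euc N) hTd).congr_of_eventuallyEq hev.symm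
  have heq := hd1.unique hRdiff.hasFDerivAt
  have hTe : T (EuclideanSpace.single j 1) = -EuclideanSpace.single j 1 := by
    rw [hT]
    simp only [reflectHyp, PiLp.single_apply, if_true, mul_one, two_smul]
    abel
  have h3 := congrArg (fun L => L (EuclideanSpace.single j (1 : ℝ))) heq
  simp only [ContinuousLinearMap.comp_apply] at h3
  change fderiv ℝ (fun x => H x x) 0 (T (EuclideanSpace.single j 1)) = _ at h3
  rw [hTe, map_neg] at h3
  linarith
end
end
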